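/- For every integer ℓ ≥ 2 and every real x > 0, the normalized random variables (K_{ℓ,n} − E[K_{ℓ,n}])/√(Var(K_{ℓ,n})) converge to the standard Gaussian in the sense of moments: for every polynomial f (equivalently, for every nonnegative integer p with f(s) = s^p), E[f((K_{ℓ,n} − E[K_{ℓ,n}])/√(Var(K_{ℓ,n})))] converges, as n → ∞, to (1/√(2π)) ∫_{−∞}^{∞} f(s) e^{−s²/2} ds. -/

import Mathlib

open Filter Topology Real MeasureTheory Asymptotics

noncomputable section

/-- Number of joint orbits of the subgroup generated by a tuple of permutations. -/
def kappa {ℓ n : ℕ} (σ : Fin ℓ → Equiv.Perm (Fin n)) : ℕ :=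
  Nat.card (MulAction.orbitRel.Quotient (Subgroup.closure (Set.range σ)) (Fin n))

/-- `Acount ℓ n k` is the number of commuting `ℓ`-tuples of permutations of `{1,…,n}`
with exactly `k` joint orbits. -/
def Acount (ℓ n k : ℕ) : ℕ :=
  Nat.card {σ : Fin ℓ → Equiv.Perm (Fin n) //
    (∀ i j, σ i * σ j = σ j * σ i) ∧ kappa σ = k}

/-- `Hpoly ℓ n x = (1/n!) ∑_k A(ℓ,n,k) x^k`. -/
def Hpoly (ℓ n : ℕ) (x : ℝ) : ℝ :=
  (1 / (n.factorial : ℝ)) * ∑ k ∈ Finset.range (n + 1), (Acount ℓ n k : ℝ) * x ^ k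

/-- Expectation, under the Ewens-like measure `P_{ℓ,n,x}`, of `g(K_{ℓ,n})`. -/
def expectK (ℓ n : ℕ) (x : ℝ) (g : ℕ → ℝ) : ℝ :=
  (∑ k ∈ Finset.range (n + 1), g k * (Acount ℓ n k : ℝ) * x ^ k) /
    (∑ k ∈ Finset.range (n + 1), (Acount ℓ n k : ℝ) * x ^ k)

/-- Mean of `K_{ℓ,n}` under `P_{ℓ,n,x}`. -/
def meanK (ℓ n : ℕ) (x : ℝ) : ℝ := expectK ℓ n x (fun k => (k : ℝ))

/-- Variance of `K_{ℓ,n}` under `P_{ℓ,n,x}`. -/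
def varK (ℓ n : ℕ) (x : ℝ) : ℝ :=
  expectK ℓ n x (fun k => ((k : ℝ) - meanK ℓ n x) ^ 2)

/-- Real Riemann zeta values (as a series), `zetaR s = ∑_{m ≥ 1} m^{-s}`. -/
def zetaR (s : ℝ) : ℝ := ∑' m : ℕ, 1 / ((m : ℝ) + 1) ^ s

/-- The constant `K_ℓ = (ℓ-1)! ζ(2)⋯ζ(ℓ)`. -/
def Kconst (ℓ : ℕ) : ℝ := ((ℓ - 1).factorial : ℝ) * ∏ j ∈ Finset.Icc 2 ℓ, zetaR (j : ℝ)

/-- The multiple series `Z^{[ℓ]}_{α_1,…,α_ℓ}(t)` with complex exponents. -/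
def Zc (ℓ : ℕ) (α : Fin ℓ → ℂ) (t : ℝ) : ℂ :=
  ∑' δ : Fin ℓ → ℕ+,
    (∏ i, ((δ i : ℕ) : ℂ) ^ (α i - 1)) *
      Complex.exp (-(((∏ i, ((δ i : ℕ) : ℝ)) * t : ℝ) : ℂ))

/-- The multiple series `Z^{[ℓ]}_{α_1,…,α_ℓ}(t)` with real exponents. -/
def Zr (ℓ : ℕ) (α : Fin ℓ → ℝ) (t : ℝ) : ℝ :=
  ∑' δ : Fin ℓ → ℕ+,
    (∏ i, ((δ i : ℕ) : ℝ) ^ (α i - 1)) *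
      Real.exp (-(∏ i, ((δ i : ℕ) : ℝ)) * t)

/-- The staircase series `Z_m^{[ℓ]}(t) = Z^{[ℓ]}_{m,m-1,…,m-ℓ+1}(t)`. -/
def Zstair (ℓ : ℕ) (m : ℤ) (t : ℝ) : ℝ :=
  Zr ℓ (fun i => (m : ℝ) - (i : ℕ)) t

/-- The inverse function `(Z_ℓ^{[ℓ]})^{-1} : (0,∞) → (0,∞)`. -/
def ZstairInv (ℓ : ℕ) (u : ℝ) : ℝ :=
  Function.invFunOn (Zstair ℓ ℓ) (Set.Ioi 0) u

/-- The function `q_{ℓ,n}(y,u,θ)` from the saddle point analysis. -/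
def qfun (ℓ n : ℕ) (y u θ : ℝ) : ℂ :=
  Complex.I * (n : ℂ) * (θ : ℂ) - (y : ℂ) * ∑' δ : Fin ℓ → ℕ+,
    (∏ i, ((δ i : ℕ) : ℂ) ^ ((ℓ : ℤ) - 2 - (i : ℕ))) *
      Complex.exp (-(((∏ i, ((δ i : ℕ) : ℝ)) * u : ℝ) : ℂ)) *
      (Complex.exp (Complex.I * (((∏ i, ((δ i : ℕ) : ℝ)) * θ : ℝ) : ℂ)) - 1)

/-- The normalizing sequence `b_n = ((x K_ℓ)^{1/(2ℓ)}/√(ℓ(ℓ-1))) n^{(ℓ-1)/(2ℓ)}`. -/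
def bseq (ℓ : ℕ) (x : ℝ) (n : ℕ) : ℝ :=
  (x * Kconst ℓ) ^ ((1 : ℝ) / (2 * (ℓ : ℝ))) / Real.sqrt ((ℓ : ℝ) * ((ℓ : ℝ) - 1)) *
    (n : ℝ) ^ (((ℓ : ℝ) - 1) / (2 * (ℓ : ℝ)))

/-- The sequence `x_n = x e^{s/b_n}`. -/
def xseq (ℓ : ℕ) (x s : ℝ) (n : ℕ) : ℝ := x * Real.exp (s / bseq ℓ x n)

/-- The saddle point sequence `t_n = (Z_ℓ^{[ℓ]})^{-1}(n/x)`. -/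
def tseq (ℓ : ℕ) (x : ℝ) (n : ℕ) : ℝ := ZstairInv ℓ ((n : ℝ) / x)

end

section parta

/-- orbits of a tuple, as a plain quotient -/
abbrev QO {ℓ : ℕ} {α : Type} (σ : Fin ℓ → Equiv.Perm α) : Type :=
  Quot (fun a b : α => ∃ i, σ i a = b)

abbrev Cm {ℓ : ℕ} {α : Type} (σ : Fin ℓ → Equiv.Perm α) : Prop := ∀ i j, σ i * σ j = σ j * σ i

lemma kappa_eq {ℓ n : ℕ} (σ : Fin ℓ → Equiv.Perm (Fin n)) : kappa σ = Nat.card (QO σ) := by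
  unfold kappa
  apply Nat.card_congr
  refine
    { toFun := Quotient.lift (fun a => (Quot.mk _ a : QO σ)) ?_
      invFun := Quot.lift (fun a => (Quotient.mk _ a)) ?_
      left_inv := ?_
      right_inv := ?_ }
  · intro a b hab
    obtain ⟨g, rfl⟩ := hab
    obtain ⟨g, hg⟩ := g
    change (Quot.mk _ (g b) : QO σ) = Quot.mk _ b
    induction hg using Subgroup.closure_induction generalizing b with
    | mem x hx =>
      obtain ⟨i, rfl⟩ := hx
      exact (Quot.sound ⟨i, rfl⟩).symm
    | one => rfl
    | mul x y hx hy h1 h2 => exact (h1 (y b)).trans (h2 b)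
    | inv x hx h =>
      have := h (x⁻¹ b)
      rw [← this]; simp
  · rintro a b ⟨i, rfl⟩
    apply Quotient.sound
    refine ⟨⟨(σ i)⁻¹, Subgroup.inv_mem _ (Subgroup.subset_closure ⟨i, rfl⟩)⟩, ?_⟩
    change (σ i)⁻¹ (σ i a) = a
    simp
  · intro q; induction q using Quotient.ind; rfl
  · intro q; induction q using Quot.ind; rfl

section
open Classical
noncomputable section

/-- weighted count of commuting tuples -/
def Wt (ℓ : ℕ) (α : Type) [Finite α] (g : ℕ → ℝ) : ℝ :=
  letI : Fintype {σ : Fin ℓ → Equiv.Perm α // Cm σ} := Fintype.ofFinite _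
  ∑ σ : {σ : Fin ℓ → Equiv.Perm α // Cm σ}, g (Nat.card (QO σ.1))

lemma Wt_def (ℓ : ℕ) (α : Type) [Finite α] (g : ℕ → ℝ)
    [inst : Fintype {σ : Fin ℓ → Equiv.Perm α // Cm σ}] :
    Wt ℓ α g = ∑ σ : {σ : Fin ℓ → Equiv.Perm α // Cm σ}, g (Nat.card (QO σ.1)) := by
  unfold Wt
  congr!

/-- transitive commuting tuples -/
def trc (ℓ : ℕ) (α : Type) : ℕ :=
  Nat.card {σ : Fin ℓ → Equiv.Perm α // Cm σ ∧ Subsingleton (QO σ)}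

/-- conjugation of tuples -/
def conjT {α β : Type} (ℓ : ℕ) (e : α ≃ β) : (Fin ℓ → Equiv.Perm α) ≃ (Fin ℓ → Equiv.Perm β) :=
  Equiv.piCongrRight (fun _ => e.permCongr)

lemma conjT_cm {α β : Type} {ℓ : ℕ} (e : α ≃ β) (σ : Fin ℓ → Equiv.Perm α) :
    Cm (conjT ℓ e σ) ↔ Cm σ := by
  have h : ∀ i, conjT ℓ e σ i = e.permCongrHom (σ i) := fun i => rfl
  simp only [Cm, h, ← map_mul]
  exact forall_congr' fun i => forall_congr' fun j => e.permCongrHom.injective.eq_iff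

def conjQ {α β : Type} {ℓ : ℕ} (e : α ≃ β) (σ : Fin ℓ → Equiv.Perm α) :
    QO σ ≃ QO (conjT ℓ e σ) :=
  Quot.congr e (by
    intro a b
    have h : ∀ i, conjT ℓ e σ i (e a) = e (σ i a) := fun i => by
      change e (σ i (e.symm (e a))) = _
      simp
    simp [h])

lemma Wt_congr {α β : Type} [Fintype α] [Fintype β] (ℓ : ℕ) (e : α ≃ β) (g : ℕ → ℝ) :
    Wt ℓ α g = Wt ℓ β g := by
  rw [Wt_def, Wt_def]
  refine Fintype.sum_equiv ((conjT ℓ e).subtypeEquiv (fun σ => (conjT_cm e σ).symm)) _ _ ?_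
  intro σ
  congr 1
  exact Nat.card_congr (conjQ e σ.1)

lemma trc_congr {α β : Type} (ℓ : ℕ) (e : α ≃ β) : trc ℓ α = trc ℓ β := by
  unfold trc
  refine Nat.card_congr ((conjT ℓ e).subtypeEquiv (fun σ => ?_))
  rw [conjT_cm, (conjQ e σ).subsingleton_congr]

/-- gluing -/
def glueT {α : Type} {ℓ : ℕ} (p : α → Prop) (σ : Fin ℓ → Equiv.Perm {a // p a})
    (τ : Fin ℓ → Equiv.Perm {a // ¬ p a}) : Fin ℓ → Equiv.Perm α :=
  fun i => Equiv.Perm.subtypeCongrHom p (σ i, τ i)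

lemma glue_cm {α : Type} {ℓ : ℕ} (p : α → Prop) (σ : Fin ℓ → Equiv.Perm {a // p a})
    (τ : Fin ℓ → Equiv.Perm {a // ¬ p a}) : Cm (glueT p σ τ) ↔ Cm σ ∧ Cm τ := by
  simp only [Cm, glueT, ← map_mul, (Equiv.Perm.subtypeCongrHom_injective p).eq_iff, Prod.mk_mul_mk,
    Prod.mk.injEq]
  exact ⟨fun h => ⟨fun i j => (h i j).1, fun i j => (h i j).2⟩, fun h i j => ⟨h.1 i j, h.2 i j⟩⟩

lemma glue_inj {α : Type} {ℓ : ℕ} (p : α → Prop) (σ σ' : Fin ℓ → Equiv.Perm {a // p a})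
    (τ τ' : Fin ℓ → Equiv.Perm {a // ¬ p a}) (i : Fin ℓ) (h : glueT p σ τ i = glueT p σ' τ' i) :
    σ i = σ' i ∧ τ i = τ' i := by
  have := Equiv.Perm.subtypeCongrHom_injective p h
  simpa using this

lemma glue_pos {α : Type} {ℓ : ℕ} (p : α → Prop) (σ : Fin ℓ → Equiv.Perm {a // p a})
    (τ : Fin ℓ → Equiv.Perm {a // ¬ p a}) (i : Fin ℓ) (a : α) (h : p a) :
    glueT p σ τ i a = σ i ⟨a, h⟩ := Equiv.Perm.subtypeCongr.left_apply _ _ h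

lemma glue_neg {α : Type} {ℓ : ℕ} (p : α → Prop) (σ : Fin ℓ → Equiv.Perm {a // p a})
    (τ : Fin ℓ → Equiv.Perm {a // ¬ p a}) (i : Fin ℓ) (a : α) (h : ¬ p a) :
    glueT p σ τ i a = τ i ⟨a, h⟩ := Equiv.Perm.subtypeCongr.right_apply _ _ h

def glueQ {α : Type} {ℓ : ℕ} (p : α → Prop) (σ : Fin ℓ → Equiv.Perm {a // p a})
    (τ : Fin ℓ → Equiv.Perm {a // ¬ p a}) : QO (glueT p σ τ) ≃ QO σ ⊕ QO τ where
  toFun := Quot.lift (fun a => if h : p a then Sum.inl (Quot.mk _ ⟨a, h⟩)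
      else Sum.inr (Quot.mk _ ⟨a, h⟩)) (by
    rintro a b ⟨i, rfl⟩
    by_cases h : p a
    · have h2 : p (glueT p σ τ i a) := by rw [glue_pos _ _ _ _ _ h]; exact (σ i ⟨a, h⟩).2
      simp only [h, h2, dif_pos]
      congr 1
      apply Quot.sound
      exact ⟨i, Subtype.ext (glue_pos _ _ _ _ _ h).symm⟩
    · have h2 : ¬ p (glueT p σ τ i a) := by rw [glue_neg _ _ _ _ _ h]; exact (τ i ⟨a, h⟩).2
      simp only [h, h2]
      simp only [dif_neg, not_false_eq_true]
      congr 1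
      apply Quot.sound
      exact ⟨i, Subtype.ext (glue_neg _ _ _ _ _ h).symm⟩)
  invFun := Sum.elim
    (Quot.lift (fun a => Quot.mk _ a.1) (by
      rintro a b ⟨i, rfl⟩
      exact Quot.sound ⟨i, glue_pos _ _ _ _ _ a.2⟩))
    (Quot.lift (fun a => Quot.mk _ a.1) (by
      rintro a b ⟨i, rfl⟩
      exact Quot.sound ⟨i, glue_neg _ _ _ _ _ a.2⟩))
  left_inv := by
    intro q
    induction q using Quot.ind with | _ a =>
    by_cases h : p a <;> simp [h]
  right_inv := by
    rintro (q | q)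
    · induction q using Quot.ind with | _ a =>
      simp [a.2]
    · induction q using Quot.ind with | _ a =>
      simp [a.2]

lemma glueQ_pos {α : Type} {ℓ : ℕ} (p : α → Prop) (σ : Fin ℓ → Equiv.Perm {a // p a})
    (τ : Fin ℓ → Equiv.Perm {a // ¬ p a}) (a : α) (h : p a) :
    glueQ p σ τ (Quot.mk _ a) = Sum.inl (Quot.mk _ ⟨a, h⟩) := by
  simp [glueQ, h]

lemma glueQ_neg {α : Type} {ℓ : ℕ} (p : α → Prop) (σ : Fin ℓ → Equiv.Perm {a // p a})
    (τ : Fin ℓ → Equiv.Perm {a // ¬ p a}) (a : α) (h : ¬ p a) :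
    glueQ p σ τ (Quot.mk _ a) = Sum.inr (Quot.mk _ ⟨a, h⟩) := by
  simp [glueQ, h]

/-- orbit of a point -/
def orb {α : Type} [Fintype α] {ℓ : ℕ} (σ : Fin ℓ → Equiv.Perm α) (o : α) : Finset α :=
  Finset.univ.filter (fun a => (Quot.mk _ a : QO σ) = Quot.mk _ o)

lemma glue_orb {α : Type} [Fintype α] {ℓ : ℕ} (S : Finset α) (o : α) (ho : o ∈ S)
    (σ : Fin ℓ → Equiv.Perm {a // a ∈ S}) (τ : Fin ℓ → Equiv.Perm {a // ¬ a ∈ S}) :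
    orb (glueT (· ∈ S) σ τ) o = S ↔ Subsingleton (QO σ) := by
  have key : ∀ a, a ∈ orb (glueT (· ∈ S) σ τ) o ↔
      ∃ h : a ∈ S, (Quot.mk _ ⟨a, h⟩ : QO σ) = Quot.mk _ ⟨o, ho⟩ := by
    intro a
    simp only [orb, Finset.mem_filter, Finset.mem_univ, true_and]
    rw [← (glueQ (· ∈ S) σ τ).injective.eq_iff, glueQ_pos (· ∈ S) σ τ o ho]
    by_cases h : a ∈ S
    · rw [glueQ_pos (· ∈ S) σ τ a h]; simp [h]
    · rw [glueQ_neg (· ∈ S) σ τ a h]; simp [h]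
  constructor
  · intro h
    have : ∀ q : QO σ, q = Quot.mk _ ⟨o, ho⟩ := by
      intro q
      induction q using Quot.ind with | _ a =>
      obtain ⟨_, h2⟩ := (key a.1).1 (by rw [h]; exact a.2)
      exact h2
    exact ⟨fun a b => (this a).trans (this b).symm⟩
  · intro h
    ext a
    rw [key]
    exact ⟨fun h => h.1, fun h => ⟨h, Subsingleton.elim _ _⟩⟩

def glueE {α : Type} [Fintype α] (ℓ : ℕ) (S : Finset α) (o : α) (ho : o ∈ S) :
    ({σ : Fin ℓ → Equiv.Perm {a // a ∈ S} // Cm σ ∧ Subsingleton (QO σ)} ×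
      {τ : Fin ℓ → Equiv.Perm {a // ¬ a ∈ S} // Cm τ}) ≃
    {σ : {σ : Fin ℓ → Equiv.Perm α // Cm σ} // orb σ.1 o = S} :=
  Equiv.ofBijective (fun x => ⟨⟨glueT (· ∈ S) x.1.1 x.2.1, (glue_cm _ _ _).2 ⟨x.1.2.1, x.2.2⟩⟩,
      (glue_orb S o ho _ _).2 x.1.2.2⟩) (by
    constructor
    · rintro ⟨⟨a, ha⟩, ⟨b, hb⟩⟩ ⟨⟨c, hc⟩, ⟨d, hd⟩⟩ h
      simp only [Subtype.mk.injEq] at h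
      have : ∀ i, a i = c i ∧ b i = d i := fun i => by
        exact glue_inj _ _ _ _ _ _ (congrFun h i)
      have h1 : a = c := funext fun i => (this i).1
      have h2 : b = d := funext fun i => (this i).2
      subst h1 h2; rfl
    · rintro ⟨⟨σ, hσ⟩, h⟩
      have hp : ∀ i a, σ i a ∈ S ↔ a ∈ S := by
        intro i a
        rw [← h]
        simp only [orb, Finset.mem_filter, Finset.mem_univ, true_and]
        rw [show (Quot.mk _ (σ i a) : QO σ) = Quot.mk _ a from (Quot.sound ⟨i, rfl⟩).symm]
      have hg : glueT (· ∈ S) (fun i => (σ i).subtypePerm (hp i))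
        (fun i => (σ i).subtypePerm (fun a => not_congr (hp i a))) = σ := by
        funext i
        ext a
        by_cases ha : a ∈ S
        · rw [glue_pos (· ∈ S) _ _ _ _ ha]; rfl
        · rw [glue_neg (· ∈ S) _ _ _ _ ha]; rfl
      have h2 := (glue_cm (· ∈ S) _ _).1 (by rw [hg]; exact hσ)
      have h3 := (glue_orb S o ho _ _).1 (by rw [hg]; exact h)
      refine ⟨⟨⟨_, h2.1, h3⟩, ⟨_, h2.2⟩⟩, ?_⟩
      apply Subtype.ext; apply Subtype.ext
      exact hg)

lemma Wt_split {α : Type} [Fintype α] (ℓ : ℕ) (o : α) (g : ℕ → ℝ) :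
    Wt ℓ α g = ∑ S ∈ Finset.univ.filter (fun S : Finset α => o ∈ S),
      (trc ℓ {a // a ∈ S} : ℝ) * Wt ℓ {a // ¬ a ∈ S} (fun k => g (k + 1)) := by
  rw [Wt_def]
  rw [← Finset.sum_fiberwise_of_maps_to (s := Finset.univ)
    (t := Finset.univ.filter (fun S : Finset α => o ∈ S))
    (g := fun σ : {σ : Fin ℓ → Equiv.Perm α // Cm σ} => orb σ.1 o)]
  · refine Finset.sum_congr rfl ?_
    intro S hS
    have ho : o ∈ S := by simpa using hS
    rw [Finset.sum_filter, ← Finset.sum_filter, ← Finset.sum_subtype_of_mem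
      (p := fun σ : {σ : Fin ℓ → Equiv.Perm α // Cm σ} => orb σ.1 o = S)
      (f := fun σ => g (Nat.card (QO σ.1))) (by simp)]
    have e1 : Finset.subtype (fun σ : {σ : Fin ℓ → Equiv.Perm α // Cm σ} => orb σ.1 o = S)
      (Finset.univ.filter (fun σ : {σ : Fin ℓ → Equiv.Perm α // Cm σ} => orb σ.1 o = S))
      = Finset.univ := by
      ext σ; simpa using σ.2
    rw [e1, ← Equiv.sum_comp (glueE ℓ S o ho), Fintype.sum_prod_type]
    have : ∀ (x : {σ : Fin ℓ → Equiv.Perm {a // a ∈ S} // Cm σ ∧ Subsingleton (QO σ)})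
      (y : {τ : Fin ℓ → Equiv.Perm {a // ¬ a ∈ S} // Cm τ}),
      g (Nat.card (QO (glueE ℓ S o ho (x, y)).1.1)) = g (Nat.card (QO y.1) + 1) := by
      intro x y
      congr 1
      have h1 := Nat.card_congr (glueQ (· ∈ S) x.1 y.1)
      rw [Nat.card_sum] at h1
      have h2 : Nat.card (QO x.1) = 1 := by
        rw [Nat.card_eq_one_iff_unique]
        exact ⟨x.2.2, ⟨Quot.mk _ ⟨o, ho⟩⟩⟩
      rw [h2, add_comm] at h1
      exact h1
    simp only [this]
    rw [Finset.sum_const, nsmul_eq_mul, trc, Nat.card_eq_fintype_card, Finset.card_univ, Wt_def]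
  · intro σ _
    simp [orb]

lemma sum_subsets (n : ℕ) (f : ℕ → ℝ) :
    ∑ S ∈ Finset.univ.filter (fun S : Finset (Fin (n+1)) => (0 : Fin (n+1)) ∈ S), f S.card =
    ∑ k ∈ Finset.range (n+1), (n.choose k : ℝ) * f (k + 1) := by
  have h1 : ∑ S ∈ Finset.univ.filter (fun S : Finset (Fin (n+1)) => (0 : Fin (n+1)) ∈ S), f S.card
     = ∑ T ∈ ((Finset.univ : Finset (Fin (n+1))).erase 0).powerset, f (T.card + 1) := by
    refine Finset.sum_nbij' (fun S => S.erase 0) (fun T => insert 0 T) ?_ ?_ ?_ ?_ ?_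
    · intro S hS
      simp only [Finset.mem_powerset]
      exact Finset.erase_subset_erase _ (Finset.subset_univ _)
    · intro T hT; simp
    · intro S hS; exact Finset.insert_erase (by simpa using hS)
    · intro T hT
      apply Finset.erase_insert
      intro h
      have := Finset.mem_powerset.1 hT h
      simp at this
    · intro S hS
      rw [Finset.card_erase_add_one (by simpa using hS)]
  rw [h1, Finset.sum_powerset_apply_card (fun k => f (k+1))]
  simp

theorem Wt_rec (ℓ n : ℕ) (y : ℝ) :
    Wt ℓ (Fin (n+1)) (fun k => y ^ k) = y * ∑ k ∈ Finset.range (n+1),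
      (n.choose k : ℝ) * ((trc ℓ (Fin (k+1)) : ℝ) * Wt ℓ (Fin (n-k)) (fun k => y ^ k)) := by
  rw [Wt_split ℓ (0 : Fin (n+1))]
  have h := sum_subsets n (fun k => (trc ℓ (Fin k) : ℝ) * (y * Wt ℓ (Fin (n+1-k)) (fun k => y ^ k)))
  have e : ∀ k, n + 1 - (k + 1) = n - k := fun k => by omega
  rw [Finset.mul_sum]
  refine Eq.trans ?_ (h.trans ?_)
  · refine Finset.sum_congr (by ext; simp) ?_
    intro S hS
    have c1 : Fintype.card {a // a ∈ S} = S.card := by simp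
    have c2 : Fintype.card {a // ¬ a ∈ S} = n + 1 - S.card := by
      rw [Fintype.card_subtype_compl]; simp
    rw [trc_congr ℓ (Fintype.equivFinOfCardEq c1), Wt_congr ℓ (Fintype.equivFinOfCardEq c2)]
    congr 1
    simp only [Wt_def, Finset.mul_sum, pow_succ']
  · refine Finset.sum_congr rfl ?_
    intro k _
    rw [e]
    ring

lemma Wt_zero (ℓ : ℕ) (y : ℝ) : Wt ℓ (Fin 0) (fun k => y ^ k) = 1 := by
  rw [Wt_def]
  have : ∀ σ : {σ : Fin ℓ → Equiv.Perm (Fin 0) // Cm σ}, Nat.card (QO σ.1) = 0 := by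
    intro σ
    have : IsEmpty (QO σ.1) := ⟨fun q => by
      induction q using Quot.ind with | _ a => exact a.elim0⟩
    simp
  simp only [this, pow_zero, Finset.sum_const, Finset.card_univ]
  have h1 : Nat.card {σ : Fin ℓ → Equiv.Perm (Fin 0) // Cm σ} = 1 := by
    rw [Nat.card_eq_one_iff_unique]
    exact ⟨⟨fun x y => Subtype.ext (Subsingleton.elim _ _)⟩, ⟨⟨fun _ => 1, fun i j => rfl⟩⟩⟩
  rw [← Nat.card_eq_fintype_card, h1]; simp

theorem sum_Acount (ℓ n : ℕ) (g : ℕ → ℝ) :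
    ∑ k ∈ Finset.range (n + 1), (Acount ℓ n k : ℝ) * g k = Wt ℓ (Fin n) g := by
  rw [Wt_def]
  rw [← Finset.sum_fiberwise_of_maps_to (s := Finset.univ) (t := Finset.range (n+1))
    (g := fun σ : {σ : Fin ℓ → Equiv.Perm (Fin n) // Cm σ} => Nat.card (QO σ.1))]
  · refine Finset.sum_congr rfl fun k _ => ?_
    rw [Finset.sum_congr rfl (g := fun _ => g k)
      (fun σ hσ => by rw [(Finset.mem_filter.1 hσ).2])]
    rw [Finset.sum_const, nsmul_eq_mul]
    congr 2
    rw [Acount, ← Fintype.card_subtype, ← Nat.card_eq_fintype_card]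
    refine Nat.card_congr ((Equiv.subtypeSubtypeEquivSubtypeInter
      (fun σ : Fin ℓ → Equiv.Perm (Fin n) => Cm σ) (fun σ => Nat.card (QO σ) = k)).trans
      (Equiv.subtypeEquivRight fun σ => ?_)).symm
    rw [kappa_eq]
  · intro σ _
    rw [Finset.mem_range, Nat.lt_succ_iff]
    have := Nat.card_le_card_of_surjective (Quot.mk (fun a b : Fin n => ∃ i, σ.1 i a = b))
      Quot.mk_surjective
    simpa using this

end
end

end parta

section partb

lemma card_fix (k : ℕ) : Nat.card {ρ : Equiv.Perm (Fin (k+1)) // ρ 0 = 0} = k.factorial := by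
  have e : {ρ : Equiv.Perm (Fin (k+1)) // ρ 0 = 0} ≃
      {x : Fin (k+1) × Equiv.Perm (Fin k) // x.1 = 0} :=
    (Equiv.Perm.decomposeFin).subtypeEquiv (fun ρ => by
      conv_lhs => rw [← Equiv.Perm.decomposeFin.symm_apply_apply ρ]
      generalize Equiv.Perm.decomposeFin ρ = x
      obtain ⟨a, b⟩ := x
      simp)
  have e2 : {x : Fin (k+1) × Equiv.Perm (Fin k) // x.1 = 0} ≃ Equiv.Perm (Fin k) :=
    { toFun := fun x => x.1.2
      invFun := fun y => ⟨(0, y), rfl⟩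
      left_inv := by rintro ⟨⟨a, b⟩, h⟩; simp at h; simp [h]
      right_inv := fun _ => rfl }
  rw [Nat.card_congr (e.trans e2), Nat.card_eq_fintype_card, Fintype.card_perm, Fintype.card_fin]

lemma trc_ge (r k : ℕ) : k.factorial * (k+1)^r ≤ trc (r+1) (Fin (k+1)) := by
  let F : {ρ : Equiv.Perm (Fin (k+1)) // ρ 0 = 0} × (Fin r → Fin (k+1)) →
    (Fin (r+1) → Equiv.Perm (Fin (k+1))) := fun x i =>
      x.1.1.permCongr (Equiv.addRight ((Fin.cons 1 x.2 : Fin (r+1) → Fin (k+1)) i))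
  have hF : ∀ x i a, F x i (x.1.1 a) = x.1.1 (a + (Fin.cons 1 x.2 : Fin (r+1) → Fin (k+1)) i) := by
    intro x i a
    simp [F]
  have hcm : ∀ x, Cm (F x) := by
    intro x i j
    ext a
    obtain ⟨b, rfl⟩ := x.1.1.surjective a
    simp only [Equiv.Perm.mul_apply, hF]
    rw [add_right_comm]
  have hind : ∀ (P : Fin (k+1) → Prop), P 0 → (∀ a, P a → P (a+1)) → ∀ a, P a := by
    intro P h0 h1 a
    obtain ⟨a, ha⟩ := a
    induction a with
    | zero => exact h0
    | succ n ih =>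
      have := h1 _ (ih (by omega))
      convert this using 1
      ext
      rw [Fin.val_add_one_of_lt']
      simpa using ha
  have htr : ∀ x, Subsingleton (QO (F x)) := by
    intro x
    have : ∀ a, (Quot.mk _ (x.1.1 a) : QO (F x)) = Quot.mk _ (x.1.1 0) := by
      apply hind
      · rfl
      · intro a h
        rw [← h]
        refine (Quot.sound ⟨0, ?_⟩).symm
        rw [hF]; rfl
    have h2 : ∀ q : QO (F x), q = Quot.mk _ (x.1.1 0) := by
      intro q
      induction q using Quot.ind with | _ a =>
      obtain ⟨b, rfl⟩ := x.1.1.surjective a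
      exact this b
    exact ⟨fun a b => (h2 a).trans (h2 b).symm⟩
  let F' : {ρ : Equiv.Perm (Fin (k+1)) // ρ 0 = 0} × (Fin r → Fin (k+1)) →
    {σ : Fin (r+1) → Equiv.Perm (Fin (k+1)) // Cm σ ∧ Subsingleton (QO σ)} :=
    fun x => ⟨F x, hcm x, htr x⟩
  have hinj : Function.Injective F' := by
    rintro ⟨⟨ρ, hρ⟩, c⟩ ⟨⟨ρ', hρ'⟩, c'⟩ h
    have h' : F ⟨⟨ρ, hρ⟩, c⟩ = F ⟨⟨ρ', hρ'⟩, c'⟩ := congrArg Subtype.val h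
    have e : ∀ a, ρ a = ρ' a := by
      apply hind
      · rw [hρ, hρ']
      · intro a ha
        have h1 := hF ⟨⟨ρ, hρ⟩, c⟩ 0 a
        have h2 := hF ⟨⟨ρ', hρ'⟩, c'⟩ 0 a
        simp only [Fin.cons_zero] at h1 h2
        rw [← h1, ← h2, h', ha]
    have e' : ρ = ρ' := Equiv.ext e
    subst e'
    have : c = c' := by
      funext i
      have h1 := hF ⟨⟨ρ, hρ⟩, c⟩ i.succ 0
      have h2 := hF ⟨⟨ρ, hρ⟩, c'⟩ i.succ 0
      simp only [Fin.cons_succ] at h1 h2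
      rw [← h', h1] at h2
      simpa using h2
    subst this; rfl
  have := Nat.card_le_card_of_injective F' hinj
  rw [Nat.card_prod, card_fix] at this
  unfold trc
  simpa using this

/-- recursive upper bound for the number of subgroups -/
def Bd : ℕ → ℕ → ℕ
  | 0, m => if m = 1 then 1 else 0
  | (ℓ+1), m => ∑ e ∈ m.divisors, e * Bd ℓ e

abbrev SubI (A : Type) [AddCommGroup A] (m : ℕ) : Type := {L : AddSubgroup A // L.index = m}

lemma sub_struct {A : Type} [AddCommGroup A] (m : ℕ) (hm : 0 < m) (L : AddSubgroup (ℤ × A))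
    (hL : L.index = m) : ∃ x : (Σ e : m.divisors, Σ L' : SubI A e.1, A ⧸ L'.1),
      (L : Set (ℤ × A)) = {p | ∃ k : ℤ, p.1 = k * (m / x.1.1 : ℕ) ∧
        (QuotientAddGroup.mk p.2 : A ⧸ x.2.1.1) = k • x.2.2} := by
  have hi : (L.map (AddMonoidHom.fst ℤ A)).index * (L.comap (AddMonoidHom.inr ℤ A)).index = m := by
    rw [AddSubgroup.index_map, AddSubgroup.index_comap]
    have h1 : (AddMonoidHom.fst ℤ A).range = ⊤ :=
      AddMonoidHom.range_eq_top.2 (fun z => ⟨(z, 0), rfl⟩)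
    have h2 : (AddMonoidHom.inr ℤ A).range = (AddMonoidHom.fst ℤ A).ker := by
      ext ⟨z, a⟩
      rw [AddMonoidHom.mem_ker, AddMonoidHom.mem_range]
      simp [eq_comm]
    rw [h1, h2, AddSubgroup.index_top, mul_one, mul_comm, ← AddSubgroup.relIndex_sup_right, sup_comm,
      AddSubgroup.relIndex_mul_index (le_sup_left), hL]
  obtain ⟨d, hd0, hd⟩ : ∃ d : ℕ, 0 < d ∧ L.map (AddMonoidHom.fst ℤ A) = AddSubgroup.zmultiples (d:ℤ) := by
    obtain ⟨d, hd⟩ := Int.subgroup_cyclic (L.map (AddMonoidHom.fst ℤ A))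
    rw [← AddSubgroup.zmultiples_eq_closure] at hd
    refine ⟨d.natAbs, ?_, ?_⟩
    · rw [Nat.pos_iff_ne_zero]
      intro h
      rw [hd, Int.index_zmultiples, h] at hi
      omega
    · rw [hd, Int.zmultiples_natAbs]
  rw [hd, Int.index_zmultiples, Int.natAbs_natCast] at hi
  set L' := L.comap (AddMonoidHom.inr ℤ A) with hL'
  have hdL : (d : ℤ) ∈ L.map (AddMonoidHom.fst ℤ A) := by
    rw [hd]; exact AddSubgroup.mem_zmultiples _
  obtain ⟨⟨d', v⟩, hv, hvd⟩ := hdL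
  simp at hvd
  subst hvd
  have he : L'.index ∈ m.divisors := by
    rw [Nat.mem_divisors]
    exact ⟨⟨d, by rw [mul_comm]; exact hi.symm⟩, hm.ne'⟩
  have hq : m / L'.index = d := by
    rw [← hi]
    exact Nat.mul_div_cancel _ (Nat.pos_of_mem_divisors he)
  refine ⟨⟨⟨L'.index, he⟩, ⟨L', rfl⟩, QuotientAddGroup.mk v⟩, ?_⟩
  ext ⟨z, a⟩
  simp only [SetLike.mem_coe, Set.mem_ofPred_eq, hq]
  have key : ∀ k : ℤ, z = k * d → ((z, a) ∈ L ↔ (QuotientAddGroup.mk a : A ⧸ L') = k • QuotientAddGroup.mk v) := by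
    intro k hk
    rw [← QuotientAddGroup.mk_zsmul, eq_comm, QuotientAddGroup.eq, hL', AddSubgroup.mem_comap]
    have hkv : k • ((d : ℤ), v) ∈ L := L.zsmul_mem hv k
    constructor
    · intro h
      rw [← L.add_mem_cancel_left hkv]
      convert h using 1
      ext <;> simp [hk]
    · intro h
      rw [← L.add_mem_cancel_left hkv] at h
      convert h using 1
      ext <;> simp [hk]
  constructor
  · intro h
    have : z ∈ L.map (AddMonoidHom.fst ℤ A) := ⟨(z, a), h, rfl⟩
    rw [hd, AddSubgroup.mem_zmultiples_iff] at this
    obtain ⟨k, hk⟩ := this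
    have hk' : z = k * d := by rw [← hk]; simp
    exact ⟨k, hk', (key k hk').1 h⟩
  · rintro ⟨k, hk, h⟩
    exact (key k hk).2 h

lemma sub_bound (ℓ : ℕ) : ∀ m : ℕ, 0 < m →
    Finite (SubI (Fin ℓ → ℤ) m) ∧ Nat.card (SubI (Fin ℓ → ℤ) m) ≤ Bd ℓ m := by
  induction ℓ with
  | zero =>
    intro m hm
    have hs : Subsingleton (SubI (Fin 0 → ℤ) m) := by
      refine ⟨fun a b => Subtype.ext ?_⟩
      ext x
      rw [Subsingleton.elim x 0]
      exact iff_of_true (zero_mem _) (zero_mem _)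
    refine ⟨inferInstance, ?_⟩
    unfold Bd
    split_ifs with h
    · exact Finite.card_le_one_iff_subsingleton.2 hs
    · rw [Nat.le_zero, Finite.card_eq_zero_iff]
      refine ⟨fun L => h ?_⟩
      rw [← L.2, AddSubgroup.index_eq_one]
      ext x
      rw [Subsingleton.elim x 0]
      exact iff_of_true (zero_mem _) (zero_mem _)
  | succ ℓ ih =>
    intro m hm
    let E : (ℤ × (Fin ℓ → ℤ)) ≃+ (Fin (ℓ+1) → ℤ) :=
      (Fin.consLinearEquiv ℤ (fun _ : Fin (ℓ+1) => ℤ)).toAddEquiv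
    have hidx : ∀ L : SubI (Fin (ℓ+1) → ℤ) m, (L.1.comap E.toAddMonoidHom).index = m := by
      intro L
      rw [AddSubgroup.index_comap_of_surjective _ E.surjective, L.2]
    choose F hF using fun L : SubI (Fin (ℓ+1) → ℤ) m => sub_struct m hm _ (hidx L)
    have hinj : Function.Injective F := by
      intro a b hab
      have h1 := hF a
      have h2 := hF b
      rw [hab, ← h2] at h1
      apply Subtype.ext
      have h3 := SetLike.coe_injective h1
      exact AddSubgroup.comap_injective E.surjective h3
    have hdpos : ∀ e : m.divisors, 0 < e.1 := fun e => Nat.pos_of_mem_divisors e.2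
    have : ∀ e : m.divisors, Finite (SubI (Fin ℓ → ℤ) e.1) := fun e => (ih e.1 (hdpos e)).1
    have hcq : ∀ (e : m.divisors) (L' : SubI (Fin ℓ → ℤ) e.1), Nat.card ((Fin ℓ → ℤ) ⧸ L'.1) = e.1 :=
      fun e L' => by rw [← AddSubgroup.index_eq_card]; exact L'.2
    have : ∀ (e : m.divisors) (L' : SubI (Fin ℓ → ℤ) e.1), Finite ((Fin ℓ → ℤ) ⧸ L'.1) :=
      fun e L' => Nat.finite_of_card_ne_zero (by rw [hcq]; exact (hdpos e).ne')
    refine ⟨Finite.of_injective F hinj, (Nat.card_le_card_of_injective F hinj).trans ?_⟩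
    classical
    have : ∀ e : m.divisors, Fintype (SubI (Fin ℓ → ℤ) e.1) := fun e => Fintype.ofFinite _
    rw [Nat.card_sigma]
    simp only [Nat.card_sigma, hcq, Finset.sum_const, Finset.card_univ, smul_eq_mul]
    unfold Bd
    rw [← Finset.sum_coe_sort m.divisors (fun e => e * Bd ℓ e)]
    refine Finset.sum_le_sum fun e _ => ?_
    rw [mul_comm]
    refine Nat.mul_le_mul_left _ ?_
    rw [← Nat.card_eq_fintype_card]
    exact (ih e.1 (hdpos e)).2

lemma trc_struct (ℓ k : ℕ) (χ : ∀ L : SubI (Fin ℓ → ℤ) (k+1), ((Fin ℓ → ℤ) ⧸ L.1) ≃ Fin (k+1))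
    (hχ : ∀ L, χ L 0 = 0) (σ : Fin ℓ → Equiv.Perm (Fin (k+1))) (hc : Cm σ)
    (ht : Subsingleton (QO σ)) :
    ∃ x : SubI (Fin ℓ → ℤ) (k+1) × {ρ : Equiv.Perm (Fin (k+1)) // ρ 0 = 0},
      ∀ i v, σ i (x.2.1 (χ x.1 (QuotientAddGroup.mk v))) =
        x.2.1 (χ x.1 (QuotientAddGroup.mk (Pi.single i 1 + v))) := by
  have hpw : Pairwise fun i j => ∀ (x y : Multiplicative ℤ),
        Commute (((zpowersHom (Equiv.Perm (Fin (k + 1)))) (σ i)) x)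
          (((zpowersHom (Equiv.Perm (Fin (k + 1)))) (σ j)) y) := by
      intro i j _ x y
      have : Commute (σ i) (σ j) := hc i j
      simp only [zpowersHom_apply]
      exact this.zpow_zpow _ _
  let f : (Fin ℓ → Multiplicative ℤ) →* Equiv.Perm (Fin (k+1)) :=
    MonoidHom.noncommPiCoprod (fun i => zpowersHom _ (σ i)) hpw
  let g : (Fin ℓ → ℤ) → Equiv.Perm (Fin (k+1)) := fun v => f (fun i => Multiplicative.ofAdd (v i))
  have g0 : g 0 = 1 := f.map_one
  have gadd : ∀ v w, g (v + w) = g v * g w := fun v w => f.map_mul _ _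
  have gneg : ∀ v, g (-v) = (g v)⁻¹ := fun v => f.map_inv _
  have gs : ∀ i, g (Pi.single i 1) = σ i := by
    intro i
    have : (fun j => Multiplicative.ofAdd ((Pi.single i 1 : Fin ℓ → ℤ) j)) =
      (Pi.mulSingle i (Multiplicative.ofAdd 1) : Fin ℓ → Multiplicative ℤ) := by
      funext j
      by_cases h : j = i
      · subst h; simp
      · simp [h]
    change f (fun j => Multiplicative.ofAdd ((Pi.single i 1 : Fin ℓ → ℤ) j)) = _
    rw [this]
    refine (MonoidHom.noncommPiCoprod_mulSingle _ _ _).trans ?_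
    simp
  let ψ : (Fin ℓ → ℤ) → Fin (k+1) := fun v => g v 0
  have ψs : ∀ i v, σ i (ψ v) = ψ (Pi.single i 1 + v) := by
    intro i v; simp only [ψ, gadd, gs]; rfl
  let L : AddSubgroup (Fin ℓ → ℤ) :=
    { carrier := {v | ψ v = 0}
      zero_mem' := by simp [ψ, g0]
      add_mem' := by
        intro a b ha hb
        simp only [Set.mem_ofPred_eq, ψ] at *
        rw [gadd, Equiv.Perm.mul_apply, hb, ha]
      neg_mem' := by
        intro a ha
        simp only [Set.mem_ofPred_eq, ψ] at *
        rw [gneg, Equiv.Perm.inv_eq_iff_eq, ha] }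
  have hsurj : Function.Surjective ψ := by
    intro b
    let P : QO σ → Prop := Quot.lift (fun a => ∃ v, ψ v = a) (by
      rintro a b ⟨i, rfl⟩
      apply propext
      constructor
      · rintro ⟨v, rfl⟩
        exact ⟨_, (ψs i v).symm⟩
      · rintro ⟨v, hv⟩
        refine ⟨-Pi.single i 1 + v, ?_⟩
        simp only [ψ, gadd, gneg, gs] at hv ⊢
        rw [Equiv.Perm.mul_apply, hv]; simp)
    have h0 : P (Quot.mk _ 0) := ⟨0, by simp [ψ, g0]⟩
    have : P (Quot.mk _ b) := by rw [Subsingleton.elim (Quot.mk _ b : QO σ) (Quot.mk _ 0)]; exact h0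
    exact this
  have hker : ∀ v w, ψ v = ψ w ↔ -v + w ∈ L := by
    intro v w
    change _ ↔ ψ (-v + w) = 0
    simp only [ψ, gadd, gneg, Equiv.Perm.mul_apply]
    rw [Equiv.Perm.inv_eq_iff_eq, eq_comm]
  let Ψ : ((Fin ℓ → ℤ) ⧸ L) ≃ Fin (k+1) := Equiv.ofBijective
    (Quotient.lift ψ (by
      intro a b h
      rw [hker]
      exact QuotientAddGroup.leftRel_apply.1 h)) (by
    constructor
    · intro a b
      induction a using QuotientAddGroup.induction_on with | _ a =>
      induction b using QuotientAddGroup.induction_on with | _ b =>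
      intro h
      rw [QuotientAddGroup.eq, ← hker]
      exact h
    · intro b
      obtain ⟨v, rfl⟩ := hsurj b
      exact ⟨QuotientAddGroup.mk v, rfl⟩)
  have hΨ : ∀ v, Ψ (QuotientAddGroup.mk v) = ψ v := fun v => rfl
  have hidx : L.index = k + 1 := by
    rw [AddSubgroup.index_eq_card, Nat.card_congr Ψ]; simp
  refine ⟨⟨⟨L, hidx⟩, ⟨(χ ⟨L, hidx⟩).symm.trans Ψ, ?_⟩⟩, ?_⟩
  · have : (χ ⟨L, hidx⟩).symm 0 = 0 := by
      rw [Equiv.symm_apply_eq, hχ]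
    rw [Equiv.trans_apply, this]
    change Ψ (QuotientAddGroup.mk 0) = 0
    rw [hΨ]; simp [ψ, g0]
  · intro i v
    simp only [Equiv.trans_apply, Equiv.symm_apply_apply]
    rw [hΨ, hΨ, ψs]

lemma trc_le (ℓ k : ℕ) : trc ℓ (Fin (k+1)) ≤ k.factorial * Bd ℓ (k+1) := by
  have hchi : ∀ L : SubI (Fin ℓ → ℤ) (k+1), ∃ χ : ((Fin ℓ → ℤ) ⧸ L.1) ≃ Fin (k+1), χ 0 = 0 := by
    intro L
    have h1 : Nat.card ((Fin ℓ → ℤ) ⧸ L.1) = k + 1 := by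
      rw [← AddSubgroup.index_eq_card]; exact L.2
    have : Finite ((Fin ℓ → ℤ) ⧸ L.1) := Nat.finite_of_card_ne_zero (by rw [h1]; omega)
    let e := Finite.equivFinOfCardEq h1
    exact ⟨e.trans (Equiv.swap (e 0) 0), by simp⟩
  choose χ hχ using hchi
  choose F hF using fun σ : {σ : Fin ℓ → Equiv.Perm (Fin (k+1)) // Cm σ ∧ Subsingleton (QO σ)} =>
    trc_struct ℓ k χ hχ σ.1 σ.2.1 σ.2.2
  have hinj : Function.Injective F := by
    intro a b hab
    apply Subtype.ext
    funext i
    ext c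
    have h1 := hF a i
    have h2 := hF b i
    obtain ⟨v, hv⟩ : ∃ v, (F a).2.1 (χ (F a).1 (QuotientAddGroup.mk v)) = c := by
      obtain ⟨q, hq⟩ := ((χ (F a).1).trans (F a).2.1).surjective c
      induction q using QuotientAddGroup.induction_on with | _ v =>
      exact ⟨v, hq⟩
    have h1' := h1 v
    have h2' := h2 v
    rw [← hab] at h2'
    rw [hv] at h1' h2'
    rw [h1', h2']
  obtain ⟨hfin, hb⟩ := sub_bound ℓ (k+1) (by omega)
  have := Nat.card_le_card_of_injective F hinj
  rw [Nat.card_prod, card_fix] at this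
  unfold trc
  refine this.trans ?_
  rw [mul_comm]
  exact Nat.mul_le_mul_left _ hb

end partb

section partc

lemma base_sum (k : ℕ) (t : ℝ) (ht : 0 < t) :
    HasSum (fun m : ℕ => exp (-(t/2))* (exp (-(t/2)))^m) ((exp (t/2) - 1)⁻¹) ∧
    ∀ m : ℕ, ((m:ℝ)+1)^k * exp (-((m:ℝ)+1) * t) ≤
      k.factorial * (2/t)^k * (exp (-(t/2))* (exp (-(t/2)))^m) := by
  constructor
  · have h1 : exp (-(t/2)) < 1 := by rw [exp_lt_one_iff]; linarith
    have := (hasSum_geometric_of_lt_one (exp_pos _).le h1).mul_left (exp (-(t/2)))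
    have h2 : exp (t/2) * exp (-(t/2)) = 1 := by rw [← exp_add]; simp
    have h3 : 1 < exp (t/2) := by rw [one_lt_exp_iff]; linarith
    have h4 : exp (t/2) - 1 ≠ 0 := by linarith
    have h5 : 1 - exp (-(t/2)) ≠ 0 := by linarith
    have h6 : (exp (t/2) - 1)⁻¹ = exp (-(t/2)) * (1 - exp (-(t/2)))⁻¹ := by
      rw [eq_mul_inv_iff_mul_eq₀ h5, inv_mul_eq_iff_eq_mul₀ h4]
      linarith
    rw [h6]; exact this
  · intro m
    have h1 := Real.pow_div_factorial_le_exp (x := ((m:ℝ)+1) * t/2) (by positivity) k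
    have h2 : exp (-((m:ℝ)+1) * t) = exp (-(((m:ℝ)+1) * t/2)) * (exp (-(t/2))* (exp (-(t/2)))^m) := by
      rw [← exp_nat_mul, ← exp_add, ← exp_add]; congr 1; ring
    rw [h2, ← mul_assoc]
    refine mul_le_mul_of_nonneg_right ?_ (by positivity)
    rw [exp_neg, ← div_eq_mul_inv, div_le_iff₀ (exp_pos _)]
    rw [div_le_iff₀ (by positivity)] at h1
    calc ((m:ℝ)+1)^k = (2/t)^k * (((m:ℝ)+1) * t/2)^k := by
          rw [← mul_pow]; congr 1; field_simp
      _ ≤ (2/t)^k * (exp (((m:ℝ)+1) * t/2) * k.factorial) := by gcongr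
      _ = _ := by ring

lemma Bd_one (m : ℕ) (hm : 0 < m) : Bd 1 m = 1 := by
  simp only [Bd]
  rw [Finset.sum_eq_single 1]
  · simp
  · intro b _ hb; simp [hb]
  · intro h; simp [hm.ne'] at h

noncomputable abbrev bt (ℓ q : ℕ) (t : ℝ) (m : ℕ+) : ENNReal :=
  ENNReal.ofReal ((Bd ℓ m : ℝ) / (m:ℝ) * (m:ℝ)^q * exp (-(m:ℝ) * t))

lemma Bd_base (k : ℕ) : ∃ C : ℝ, 0 < C ∧ ∀ t : ℝ, 0 < t →
    ∑' m : ℕ+, bt 1 (k+1) t m ≤ ENNReal.ofReal (C / t^(k+1)) := by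
  refine ⟨k.factorial * 2^(k+1), by positivity, fun t ht => ?_⟩
  rw [tsum_pnat_eq_tsum_succ (f := fun m : ℕ => ENNReal.ofReal ((Bd 1 m : ℝ) / (m:ℝ) * (m:ℝ)^(k+1) * exp (-(m:ℝ) * t)))]
  obtain ⟨h1, h2⟩ := base_sum k t ht
  have h3 := (h1.mul_left (k.factorial * (2/t)^k : ℝ))
  calc _ ≤ ∑' m : ℕ, ENNReal.ofReal (k.factorial * (2/t)^k * (exp (-(t/2))* (exp (-(t/2)))^m)) := by
        refine ENNReal.tsum_le_tsum fun m => ENNReal.ofReal_le_ofReal ?_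
        rw [Bd_one _ (by omega)]
        refine le_trans (le_of_eq ?_) (h2 m)
        push_cast
        field_simp
        ring
    _ = ENNReal.ofReal (k.factorial * (2/t)^k * (exp (t/2) - 1)⁻¹) := by
        rw [← ENNReal.ofReal_tsum_of_nonneg (fun n => by positivity) h3.summable, h3.tsum_eq]
    _ ≤ _ := by
        refine ENNReal.ofReal_le_ofReal ?_
        have : (exp (t/2) - 1)⁻¹ ≤ 2/t := by
          rw [inv_le_comm₀ (by have := add_one_lt_exp (x := t/2) (by positivity); linarith) (by positivity), inv_div]
          have := add_one_le_exp (t/2); linarith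
        calc (k.factorial * (2/t)^k * (exp (t/2) - 1)⁻¹ : ℝ) ≤ k.factorial * (2/t)^k * (2/t) := by gcongr
          _ = _ := by rw [div_pow]; field_simp; ring

lemma Bd_step (j q : ℕ) (C : ℝ) (hC : 0 < C)
    (h : ∀ t : ℝ, 0 < t → ∑' m : ℕ+, bt (j+1) (q+1) t m ≤ ENNReal.ofReal (C / t^(j+(q+1)))) :
    ∃ C : ℝ, 0 < C ∧ ∀ t : ℝ, 0 < t → ∑' m : ℕ+, bt (j+2) q t m ≤ ENNReal.ofReal (C / t^(j+1+q)) := by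
  have hs : Summable (fun d : ℕ+ => 1 / (d:ℝ)^(j+2)) := by
    have := (Real.summable_one_div_nat_pow (p := j+2)).2 (by omega)
    exact this.comp_injective PNat.coe_injective
  have hpos : ∀ d : ℕ+, (0:ℝ) < (d:ℝ) := fun d => by exact_mod_cast d.pos
  refine ⟨C * ∑' d : ℕ+, 1 / (d:ℝ)^(j+2), mul_pos hC ?_, fun t ht => ?_⟩
  · refine hs.tsum_pos (fun d => by positivity) 1 (by simp)
  have e1 : ∀ m : ℕ+, bt (j+2) q t m = ∑' x : Nat.divisorsAntidiagonal m,
      ENNReal.ofReal ((x.1.1:ℝ)^q / (x.1.1:ℝ) * ((Bd (j+1) x.1.2 : ℝ) / (x.1.2:ℝ) * (x.1.2:ℝ)^(q+1) *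
        exp (-(x.1.2:ℝ) * (x.1.1 * t)))) := by
    intro m
    rw [Finset.tsum_subtype (Nat.divisorsAntidiagonal m) (fun x : ℕ × ℕ => ENNReal.ofReal ((x.1:ℝ)^q / (x.1:ℝ) * ((Bd (j+1) x.2 : ℝ) / (x.2:ℝ) * (x.2:ℝ)^(q+1) *
        exp (-(x.2:ℝ) * (x.1 * t)))))]
    rw [← ENNReal.ofReal_sum_of_nonneg (fun i _ => by positivity)]
    unfold bt
    congr 1
    simp only [Bd]
    rw [← Nat.sum_divisorsAntidiagonal' (f := fun d e => e * ∑ x ∈ e.divisors, x * Bd j x)]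
    push_cast
    rw [Finset.sum_div, Finset.sum_mul, Finset.sum_mul]
    refine Finset.sum_congr rfl fun x hx => ?_
    rw [Nat.mem_divisorsAntidiagonal] at hx
    have h1 : (m:ℝ) = x.1 * x.2 := by exact_mod_cast hx.1.symm
    have h2 : (x.1:ℝ) ≠ 0 := by
      intro h; rw [h] at h1; have := hpos m; simp at h1
    have h3 : (x.2:ℝ) ≠ 0 := by
      intro h; rw [h] at h1; have := hpos m; simp at h1
    rw [h1, show -((x.1:ℝ) * x.2) * t = -(x.2:ℝ) * (x.1 * t) by ring]
    field_simp
    rw [mul_pow]; ring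
  simp only [e1]
  rw [← ENNReal.tsum_sigma' (f := fun p : (Σ n : ℕ+, Nat.divisorsAntidiagonal n) =>
    ENNReal.ofReal ((p.2.1.1:ℝ)^q / (p.2.1.1:ℝ) * ((Bd (j+1) p.2.1.2 : ℝ) / (p.2.1.2:ℝ) * (p.2.1.2:ℝ)^(q+1) *
        exp (-(p.2.1.2:ℝ) * (p.2.1.1 * t)))))]
  rw [← sigmaAntidiagonalEquivProd.symm.tsum_eq, ENNReal.tsum_prod']
  simp only [sigmaAntidiagonalEquivProd_symm_apply_snd]
  calc _ ≤ ∑' d : ℕ+, ENNReal.ofReal (C / t^(j+1+q) * (1 / (d:ℝ)^(j+2))) := by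
        refine ENNReal.tsum_le_tsum fun d => ?_
        have := h (d * t) (mul_pos (hpos d) ht)
        change ∑' e : ℕ+, ENNReal.ofReal ((d:ℝ)^q / (d:ℝ) * ((Bd (j+1) e : ℝ) / (e:ℝ) * (e:ℝ)^(q+1) * exp (-(e:ℝ) * ((d:ℝ) * t)))) ≤ _
        simp only [ENNReal.ofReal_mul (show (0:ℝ) ≤ (d:ℝ)^q / (d:ℝ) by positivity)]
        rw [ENNReal.tsum_mul_left]
        refine (mul_le_mul_right this _).trans ?_
        rw [← ENNReal.ofReal_mul (by positivity)]
        refine ENNReal.ofReal_le_ofReal (le_of_eq ?_)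
        have := (hpos d).ne'
        field_simp
        ring
    _ ≤ _ := by
        have h3 := hs.mul_left (C / t^(j+1+q))
        rw [← ENNReal.ofReal_tsum_of_nonneg (fun n => by positivity) h3, tsum_mul_left]
        refine ENNReal.ofReal_le_ofReal (le_of_eq ?_)
        ring

lemma Bd_all (j : ℕ) : ∀ q, ∃ C : ℝ, 0 < C ∧ ∀ t : ℝ, 0 < t →
    ∑' m : ℕ+, bt (j+2) q t m ≤ ENNReal.ofReal (C / t^(j+1+q)) := by
  induction j with
  | zero =>
    intro q
    obtain ⟨C, hC, h⟩ := Bd_base q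
    exact Bd_step 0 q C hC (by simpa using h)
  | succ j ih =>
    intro q
    obtain ⟨C, hC, h⟩ := ih (q+1)
    exact Bd_step (j+1) q C hC h

/-- exponential weights -/
noncomputable def av (ℓ m : ℕ) : ℝ := if m = 0 then 0 else (trc ℓ (Fin m) : ℝ) / m.factorial

lemma av_nonneg (ℓ m : ℕ) : 0 ≤ av ℓ m := by
  unfold av; split_ifs <;> positivity

lemma av_ge (r m : ℕ) : ((m:ℝ)+1)^r ≤ av (r+2) (m+1) := by
  unfold av
  rw [if_neg (by omega), le_div_iff₀ (by positivity), Nat.factorial_succ]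
  have := trc_ge (r+1) m
  have h : ((m.factorial * (m+1)^(r+1) : ℕ):ℝ) ≤ trc (r+2) (Fin (m+1)) := by exact_mod_cast this
  refine le_trans (le_of_eq ?_) h
  push_cast; ring

lemma av_le (ℓ m : ℕ) (hm : 0 < m) : av ℓ m ≤ (Bd ℓ m : ℝ) / m := by
  obtain ⟨k, rfl⟩ : ∃ k, m = k + 1 := ⟨m-1, by omega⟩
  unfold av
  rw [if_neg (by omega), Nat.factorial_succ]
  have h : (trc ℓ (Fin (k+1)) : ℝ) ≤ ((k.factorial * Bd ℓ (k+1) : ℕ):ℝ) := by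
    exact_mod_cast trc_le ℓ k
  rw [div_le_div_iff₀ (by positivity) (by positivity)]
  push_cast at h ⊢
  nlinarith [show (0:ℝ) ≤ (k:ℝ)+1 by positivity]

theorem av_sum (r q : ℕ) : ∃ C : ℝ, 0 < C ∧ ∀ t : ℝ, 0 < t →
    Summable (fun m : ℕ => (m:ℝ)^q * av (r+2) m * exp (-(m:ℝ) * t)) ∧
    ∑' m : ℕ, (m:ℝ)^q * av (r+2) m * exp (-(m:ℝ) * t) ≤ C / t^(r+1+q) := by
  obtain ⟨C, hC, h⟩ := Bd_all r q
  refine ⟨C, hC, fun t ht => ?_⟩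
  have hn : ∀ m : ℕ, 0 ≤ (m:ℝ)^q * av (r+2) m * exp (-(m:ℝ) * t) := fun m =>
    mul_nonneg (mul_nonneg (by positivity) (av_nonneg _ _)) (exp_pos _).le
  have key : ∑' m : ℕ, ENNReal.ofReal ((m:ℝ)^q * av (r+2) m * exp (-(m:ℝ) * t)) ≤
      ENNReal.ofReal (C / t^(r+1+q)) := by
    refine le_trans ?_ (h t ht)
    rw [tsum_pnat_eq_tsum_succ (f := fun m : ℕ => ENNReal.ofReal ((Bd (r+2) m : ℝ) / (m:ℝ) * (m:ℝ)^q * exp (-(m:ℝ) * t)))]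
    rw [tsum_eq_zero_add' ENNReal.summable]
    simp only [av, if_pos, mul_zero, zero_mul, ENNReal.ofReal_zero, zero_add]
    refine ENNReal.tsum_le_tsum fun m => ENNReal.ofReal_le_ofReal ?_
    have := av_le (r+2) (m+1) (by omega)
    unfold av at this
    rw [mul_comm (((m+1:ℕ):ℝ)^q)]
    gcongr
  have hs : Summable (fun m : ℕ => (m:ℝ)^q * av (r+2) m * exp (-(m:ℝ) * t)) := by
    have h1 : ∑' m : ℕ, ENNReal.ofReal ((m:ℝ)^q * av (r+2) m * exp (-(m:ℝ) * t)) ≠ ⊤ :=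
      ne_top_of_le_ne_top ENNReal.ofReal_ne_top key
    have h2 := ENNReal.summable_toReal h1
    refine h2.congr fun m => ?_
    rw [ENNReal.toReal_ofReal (hn m)]
  refine ⟨hs, ?_⟩
  rw [← ENNReal.ofReal_tsum_of_nonneg hn hs, ENNReal.ofReal_le_ofReal_iff (by positivity)] at key
  exact key

end partc

section partd

/-- the generating function -/
noncomputable def Gf (a : ℕ → ℝ) (z : ℂ) : ℂ := ∑' m : ℕ, (a m : ℂ) * z ^ m

lemma Gf_hasF (a : ℕ → ℝ) (ha : ∀ m, 0 ≤ a m)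
    (hs : ∀ t : ℝ, 0 < t → Summable (fun m : ℕ => a m * exp (-(m:ℝ) * t))) :
    HasFPowerSeriesOnBall (Gf a) (FormalMultilinearSeries.ofScalars ℂ (fun m => (a m : ℂ))) 0 1 := by
  have hr : (1 : ENNReal) ≤ (FormalMultilinearSeries.ofScalars ℂ (fun m => (a m : ℂ))).radius := by
    refine ENNReal.le_of_forall_nnreal_lt fun ρ hρ => ?_
    rcases eq_or_ne ρ 0 with rfl | h0
    · simp
    apply FormalMultilinearSeries.le_radius_of_summable_norm
    have h1 : (ρ:ℝ) < 1 := by exact_mod_cast hρ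
    have h2 : (0:ℝ) < ρ := by exact_mod_cast pos_iff_ne_zero.2 h0
    refine (hs (-Real.log ρ) (by have := Real.log_neg h2 h1; linarith)).congr fun m => ?_
    rw [FormalMultilinearSeries.ofScalars_norm]
    rw [show -(m:ℝ) * -Real.log ρ = m * Real.log ρ by ring, Real.exp_nat_mul, Real.exp_log h2]
    simp [abs_of_nonneg (ha m)]
  have h := (FormalMultilinearSeries.ofScalars ℂ (fun m => (a m : ℂ))).hasFPowerSeriesOnBall
    (lt_of_lt_of_le one_pos hr)
  have h' := h.mono one_pos hr
  refine h'.congr fun z _ => ?_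
  unfold Gf FormalMultilinearSeries.sum
  simp [mul_comm]

lemma Gf_deriv (a : ℕ → ℝ) (ha : ∀ m, 0 ≤ a m)
    (hs : ∀ t : ℝ, 0 < t → Summable (fun m : ℕ => a m * exp (-(m:ℝ) * t))) (n : ℕ) :
    iteratedDeriv n (Gf a) 0 = n.factorial * a n := by
  have := (Gf_hasF a ha hs).factorial_smul 1 n
  rw [iteratedFDeriv_apply_eq_iteratedDeriv_mul_prod, Finset.prod_const_one, one_smul] at this
  rw [← this]
  simp

lemma Wt_eq_iter (a : ℕ → ℝ) (ha : ∀ m, 0 ≤ a m) (a0 : a 0 = 0)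
    (hs : ∀ t : ℝ, 0 < t → Summable (fun m : ℕ => a m * exp (-(m:ℝ) * t))) (y : ℝ) (W : ℕ → ℝ)
    (W0 : W 0 = 1) (hW : ∀ n, W (n+1) = y * ∑ k ∈ Finset.range (n+1),
      (n.choose k:ℝ) * (((k+1).factorial * a (k+1)) * W (n-k))) (n : ℕ) :
    iteratedDeriv n (fun z => Complex.exp (y * Gf a z)) 0 = W n := by
  have hA : AnalyticOnNhd ℂ (Gf a) (Metric.ball 0 1) := by
    have := (Gf_hasF a ha hs).analyticOnNhd
    have e : Metric.eball (0:ℂ) 1 = Metric.ball 0 1 := by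
      rw [← ENNReal.ofReal_one, Metric.eball_ofReal]
    rwa [e] at this
  have hd : ∀ z ∈ Metric.ball (0:ℂ) 1, DifferentiableAt ℂ (Gf a) z := fun z hz =>
    (hA z hz).differentiableAt
  have h0 : (0:ℂ) ∈ Metric.ball (0:ℂ) 1 := by simp
  induction n using Nat.strong_induction_on with
  | _ n ih =>
  rcases n with _ | n
  · simp only [iteratedDeriv_zero, W0]
    have := Gf_deriv a ha hs 0
    simp only [iteratedDeriv_zero] at this
    simp [this, a0]
  · rw [iteratedDeriv_succ', hW]
    have ev : deriv (fun z => Complex.exp (y * Gf a z)) =ᶠ[𝓝 0]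
        fun z => (y : ℂ) * (deriv (Gf a) * (fun z => Complex.exp (y * Gf a z))) z := by
      filter_upwards [Metric.isOpen_ball.mem_nhds h0] with z hz
      have := ((hd z hz).hasDerivAt.const_mul (y:ℂ)).cexp.deriv
      rw [this]; simp only [Pi.mul_apply]; ring
    rw [ev.iteratedDeriv_eq, iteratedDeriv_const_mul_field, iteratedDeriv_mul]
    · push_cast
      congr 1
      refine Finset.sum_congr rfl fun k hk => ?_
      rw [← iteratedDeriv_succ', Gf_deriv a ha hs, ih (n-k) (by omega)]
      push_cast; ring
    · exact ((hA 0 h0).deriv).contDiffAt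
    · exact (AnalyticAt.cexp ((analyticAt_const).mul (hA 0 h0))).contDiffAt

lemma Wt_integral (a : ℕ → ℝ) (ha : ∀ m, 0 ≤ a m) (a0 : a 0 = 0)
    (hs : ∀ t : ℝ, 0 < t → Summable (fun m : ℕ => a m * exp (-(m:ℝ) * t))) (y : ℝ) (W : ℕ → ℝ)
    (W0 : W 0 = 1) (hW : ∀ n, W (n+1) = y * ∑ k ∈ Finset.range (n+1),
      (n.choose k:ℝ) * (((k+1).factorial * a (k+1)) * W (n-k))) (n : ℕ) (t : ℝ) (ht : 0 < t) :
    (W n : ℂ) = (n.factorial / (2 * π) * exp (n * t + y * ∑' m : ℕ, a m * exp (-(m:ℝ) * t)) : ℝ) *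
      ∫ θ in (-π)..π, Complex.exp (y * ∑' m : ℕ, ((a m * exp (-(m:ℝ) * t) : ℝ) : ℂ) *
        (Complex.exp (m * θ * Complex.I) - 1) - n * θ * Complex.I) := by
  have hA : AnalyticOnNhd ℂ (Gf a) (Metric.ball 0 1) := by
    have := (Gf_hasF a ha hs).analyticOnNhd
    have e : Metric.eball (0:ℂ) 1 = Metric.ball 0 1 := by
      rw [← ENNReal.ofReal_one, Metric.eball_ofReal]
    rwa [e] at this
  have hR1 : exp (-t) < 1 := by rw [exp_lt_one_iff]; linarith
  have hD : DiffContOnCl ℂ (fun z => Complex.exp (y * Gf a z)) (Metric.ball 0 (exp (-t))) := by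
    refine DifferentiableOn.diffContOnCl ?_
    rw [closure_ball _ (exp_pos _).ne']
    intro z hz
    have hz' : z ∈ Metric.ball (0:ℂ) 1 := Metric.closedBall_subset_ball hR1 hz
    exact (((hA z hz').differentiableAt).const_mul (y:ℂ)).cexp.differentiableWithinAt
  have key := hD.circleIntegral_one_div_sub_center_pow_smul (exp_pos _) n
  rw [Wt_eq_iter a ha a0 hs y W W0 hW n] at key
  rw [circleIntegral] at key
  have hs0 := hs t ht
  have pt : ∀ θ : ℝ, deriv (circleMap 0 (exp (-t))) θ • (1 / (circleMap 0 (exp (-t)) θ - 0) ^ (n + 1)) •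
      Complex.exp (y * Gf a (circleMap 0 (exp (-t)) θ)) =
      Complex.I * (exp (n * t + y * ∑' m : ℕ, a m * exp (-(m:ℝ) * t)) : ℝ) *
      Complex.exp (y * ∑' m : ℕ, ((a m * exp (-(m:ℝ) * t) : ℝ) : ℂ) *
        (Complex.exp (m * θ * Complex.I) - 1) - n * θ * Complex.I) := by
    intro θ
    have c1 : circleMap 0 (exp (-t)) θ = Complex.exp (-t + θ * Complex.I) := by
      rw [circleMap_zero, Complex.exp_add]; push_cast; ring
    have c2 : Gf a (circleMap 0 (exp (-t)) θ) = (∑' m : ℕ, a m * exp (-(m:ℝ) * t) : ℝ) +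
        ∑' m : ℕ, ((a m * exp (-(m:ℝ) * t) : ℝ) : ℂ) * (Complex.exp (m * θ * Complex.I) - 1) := by
      have s1 : Summable (fun m : ℕ => ((a m * exp (-(m:ℝ) * t) : ℝ) : ℂ) * Complex.exp (m * θ * Complex.I)) := by
        refine Summable.of_norm ?_
        refine hs0.congr fun m => ?_
        rw [norm_mul, show (m * θ * Complex.I : ℂ) = ((m * θ : ℝ):ℂ) * Complex.I by push_cast; ring,
          Complex.norm_exp_ofReal_mul_I, mul_one, Complex.norm_real, Real.norm_eq_abs,
          abs_of_nonneg (mul_nonneg (ha m) (exp_pos _).le)]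
      have s2 : Summable (fun m : ℕ => ((a m * exp (-(m:ℝ) * t) : ℝ) : ℂ)) := Complex.ofRealCLM.summable hs0
      rw [Complex.ofReal_tsum]
      simp only [mul_sub, mul_one]
      rw [s1.tsum_sub s2]
      rw [add_sub_cancel]
      unfold Gf
      congr 1; ext m
      rw [c1, ← Complex.exp_nat_mul]
      push_cast
      rw [mul_assoc, ← Complex.exp_add]
      congr 2; ring
    rw [c2, deriv_circleMap, sub_zero, c1, ← Complex.exp_nat_mul]
    simp only [smul_eq_mul, one_div, ← Complex.exp_neg]
    rw [Complex.ofReal_exp]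
    rw [show ∀ A B C D E : ℂ, A * B * (C * D) = B * (A * C * D) by intros; ring]
    · rw [mul_assoc, mul_assoc, ← Complex.exp_add, ← Complex.exp_add, ← Complex.exp_add]
      congr 2
      push_cast; ring
    all_goals exact 0
  simp only [pt] at key
  rw [intervalIntegral.integral_const_mul] at key
  have per : Function.Periodic (fun θ : ℝ => Complex.exp (y * ∑' m : ℕ, ((a m * exp (-(m:ℝ) * t) : ℝ) : ℂ) *
        (Complex.exp (m * θ * Complex.I) - 1) - n * θ * Complex.I)) (2 * π) := by
    intro θ
    have e : ∀ m : ℕ, Complex.exp (m * (θ + 2 * π : ℝ) * Complex.I) = Complex.exp (m * θ * Complex.I) := by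
      intro m
      rw [Complex.exp_eq_exp_iff_exists_int]
      exact ⟨m, by push_cast; ring⟩
    simp only [e]
    rw [Complex.exp_sub, Complex.exp_sub, e]
  have sh := per.intervalIntegral_add_eq 0 (-π)
  rw [zero_add, show -π + 2 * π = π by ring] at sh
  rw [sh] at key
  have hf : (n.factorial : ℂ) ≠ 0 := by exact_mod_cast n.factorial_ne_zero
  have hpi : (π : ℂ) ≠ 0 := by exact_mod_cast Real.pi_ne_zero
  set J := ∫ θ in (-π)..π, Complex.exp (y * ∑' m : ℕ, ((a m * exp (-(m:ℝ) * t) : ℝ) : ℂ) *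
        (Complex.exp (m * θ * Complex.I) - 1) - n * θ * Complex.I)
  set X := exp (n * t + y * ∑' m : ℕ, a m * exp (-(m:ℝ) * t))
  rw [smul_eq_mul] at key
  push_cast
  have key2 : (X:ℂ) * J = 2 * π / n.factorial * W n := by
    have := Complex.I_ne_zero
    apply mul_left_cancel₀ this
    rw [← mul_assoc, key]; ring
  rw [mul_assoc, key2]
  field_simp

end partd

section parte

/-- growth data of a weight sequence -/
structure Dat (r : ℕ) (a : ℕ → ℝ) : Prop where
  nn : ∀ m, 0 ≤ a m
  zero : a 0 = 0
  ge : ∀ m : ℕ, 1 ≤ m → (m:ℝ)^r ≤ a m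
  bd : ∀ q : ℕ, ∃ C : ℝ, 0 < C ∧ ∀ t : ℝ, 0 < t →
    Summable (fun m : ℕ => (m:ℝ)^q * a m * exp (-(m:ℝ) * t)) ∧
    ∑' m : ℕ, (m:ℝ)^q * a m * exp (-(m:ℝ) * t) ≤ C / t^(r+1+q)

/-- moment sums -/
noncomputable def Ss (a : ℕ → ℝ) (q : ℕ) (t : ℝ) : ℝ := ∑' m : ℕ, (m:ℝ)^q * a m * exp (-(m:ℝ) * t)

variable {r : ℕ} {a : ℕ → ℝ}

lemma Dat.summ (H : Dat r a) (q : ℕ) {t : ℝ} (ht : 0 < t) :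
    Summable (fun m : ℕ => (m:ℝ)^q * a m * exp (-(m:ℝ) * t)) := by
  obtain ⟨C, _, h⟩ := H.bd q
  exact (h t ht).1

lemma Dat.summ0 (H : Dat r a) {t : ℝ} (ht : 0 < t) :
    Summable (fun m : ℕ => a m * exp (-(m:ℝ) * t)) := by
  simpa using H.summ 0 ht

lemma Dat.upper (H : Dat r a) (q : ℕ) : ∃ C : ℝ, 0 < C ∧ ∀ t : ℝ, 0 < t → Ss a q t ≤ C / t^(r+1+q) := by
  obtain ⟨C, hC, h⟩ := H.bd q
  exact ⟨C, hC, fun t ht => (h t ht).2⟩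

lemma Dat.block (H : Dat r a) {t : ℝ} (f : ℕ → ℝ) (hf : ∀ m, 0 ≤ f m)
    (hs : Summable (fun m : ℕ => a m * exp (-(m:ℝ) * t) * f m)) (N : ℕ) (hN : 1 ≤ N) (D δ : ℝ)
    (hδ : 0 ≤ δ) (hD : (N:ℝ) * t ≤ D) (ht : 0 < t) (hfδ : ∀ m, N ≤ m → m < 2 * N → δ ≤ f m) :
    δ * (N:ℝ)^(r+1) * exp (-(2*D)) ≤ ∑' m : ℕ, a m * exp (-(m:ℝ) * t) * f m := by
  have h1 := hs.sum_le_tsum (Finset.Ico N (2*N)) (fun m _ =>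
    mul_nonneg (mul_nonneg (H.nn m) (exp_pos _).le) (hf m))
  refine le_trans ?_ h1
  have h2 : ∀ m ∈ Finset.Ico N (2*N), (N:ℝ)^r * exp (-(2*D)) * δ ≤ a m * exp (-(m:ℝ) * t) * f m := by
    intro m hm
    rw [Finset.mem_Ico] at hm
    have e1 : (N:ℝ)^r ≤ a m := le_trans (by gcongr; exact hm.1) (H.ge m (by omega))
    have e3 : (m:ℝ) ≤ 2 * N := by exact_mod_cast hm.2.le
    have e2 : exp (-(2*D)) ≤ exp (-(m:ℝ) * t) := by
      apply exp_le_exp.2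
      nlinarith
    have := hfδ m hm.1 hm.2
    have := H.nn m
    gcongr
  have h3 := Finset.card_nsmul_le_sum _ _ _ h2
  refine le_trans (le_of_eq ?_) h3
  rw [Nat.card_Ico, show 2 * N - N = N by omega, nsmul_eq_mul]
  ring

/-- scale facts -/
lemma Mfacts {t : ℝ} (ht : 0 < t) (ht1 : t ≤ 1) : 1 ≤ ⌈1/t⌉₊ ∧ 1/t ≤ (⌈1/t⌉₊:ℝ) ∧ (⌈1/t⌉₊:ℝ) * t ≤ 2 := by
  have h0 : 0 < 1/t := by positivity
  refine ⟨Nat.one_le_iff_ne_zero.2 (Nat.ceil_pos.2 h0).ne', Nat.le_ceil _, ?_⟩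
  have h1 := Nat.ceil_lt_add_one h0.le
  have : (⌈1/t⌉₊:ℝ) * t ≤ (1/t + 1) * t := by gcongr
  have h2 : (1/t + 1) * t = 1 + t := by field_simp
  linarith

lemma Dat.lower (H : Dat r a) (q : ℕ) : ∃ c : ℝ, 0 < c ∧ ∀ t : ℝ, 0 < t → t ≤ 1 → c / t^(r+1+q) ≤ Ss a q t := by
  refine ⟨exp (-4), exp_pos _, fun t ht ht1 => ?_⟩
  obtain ⟨h1, h2, h3⟩ := Mfacts ht ht1
  have hs : Summable (fun m : ℕ => a m * exp (-(m:ℝ) * t) * (m:ℝ)^q) :=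
    (H.summ q ht).congr fun m => by ring
  have := H.block (fun m => (m:ℝ)^q) (fun m => by positivity) hs _ h1 2 ((⌈1/t⌉₊:ℝ)^q) (by positivity) h3 ht
    (fun m hm _ => by gcongr)
  have e : Ss a q t = ∑' m : ℕ, a m * exp (-(m:ℝ) * t) * (m:ℝ)^q := by
    unfold Ss; congr 1; ext m; ring
  rw [e]
  refine le_trans ?_ this
  rw [← pow_add, show q + (r+1) = r+1+q by ring, show -(2*2:ℝ) = -4 by norm_num]
  rw [mul_comm, div_eq_mul_one_div]
  refine mul_le_mul_of_nonneg_left ?_ (exp_pos _).le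
  rw [← one_div_pow]
  gcongr

lemma Dat.S_pos (H : Dat r a) (q : ℕ) {t : ℝ} (ht : 0 < t) : 0 < Ss a q t := by
  refine (H.summ q ht).tsum_pos (fun m => mul_nonneg (mul_nonneg (by positivity) (H.nn m)) (exp_pos _).le) 1 ?_
  have := H.ge 1 le_rfl
  have : 0 < a 1 := lt_of_lt_of_le (by simp) this
  positivity

/-- variance scale -/
noncomputable def Bq (a : ℕ → ℝ) (t : ℝ) : ℝ := Ss a 0 t - Ss a 1 t ^ 2 / Ss a 2 t

lemma Dat.Bq_lower (H : Dat r a) : ∃ c : ℝ, 0 < c ∧ ∀ t : ℝ, 0 < t → t ≤ 1 → c / t^(r+1) ≤ Bq a t := by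
  refine ⟨exp (-32)/4, by positivity, fun t ht ht1 => ?_⟩
  obtain ⟨h1, h2, h3⟩ := Mfacts ht ht1
  set M := ⌈1/t⌉₊
  have hMt : (1/t)^(r+1) ≤ (M:ℝ)^(r+1) := by gcongr
  have hM0 : (1:ℝ) ≤ M := by exact_mod_cast h1
  set l := Ss a 1 t / Ss a 2 t with hl
  have hS2 := (H.S_pos 2 ht).ne'
  have i0 := (H.summ 0 ht).hasSum
  have i1 := ((H.summ 1 ht).hasSum).mul_left (-2 * l)
  have i2 := ((H.summ 2 ht).hasSum).mul_left (l^2)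
  have i3 := (i0.add i1).add i2
  have hs : HasSum (fun m : ℕ => a m * exp (-(m:ℝ) * t) * (1 - l * m)^2) (Bq a t) := by
    convert i3 using 1
    · ext m; ring
    · change Bq a t = Ss a 0 t + -2 * l * Ss a 1 t + l^2 * Ss a 2 t
      rw [Bq, hl]; field_simp; ring
  rw [← hs.tsum_eq]
  have hcomp : exp (-32)/4 / t^(r+1) = (1/4) * (1/t)^(r+1) * exp (-32) := by
    rw [one_div_pow]; ring
  rw [hcomp]
  rcases le_or_gt l (1/(4*M)) with hc | hc
  · have := H.block (fun m => (1 - l*m)^2) (fun m => sq_nonneg _) hs.summable M h1 2 (1/4) (by norm_num) h3 ht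
      (fun m hm hm2 => by
        have : (m:ℝ) ≤ 2 * M := by exact_mod_cast hm2.le
        have h5 : l * m ≤ 1/2 := by
          calc l * m ≤ 1/(4*M) * m := by gcongr
            _ ≤ 1/(4*M) * (2*M) := by gcongr
            _ = 1/2 := by field_simp; norm_num
        nlinarith)
    refine le_trans ?_ this
    gcongr
    norm_num
  · have := H.block (fun m => (1 - l*m)^2) (fun m => sq_nonneg _) hs.summable (8*M) (by omega) 16 (1/4) (by norm_num)
      (by push_cast; linarith) ht
      (fun m hm hm2 => by
        have : (8:ℝ) * M ≤ m := by exact_mod_cast hm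
        have hl0 : 0 ≤ l := le_trans (by positivity) hc.le
        have h5 : 2 ≤ l * m := by
          calc (2:ℝ) = 1/(4*M) * (8*M) := by field_simp; norm_num
            _ ≤ l * m := by gcongr
        nlinarith)
    refine le_trans ?_ this
    gcongr
    · push_cast; linarith
    · norm_num

lemma pair_cos (α β : ℝ) : (1 - cos (β - α)) / 2 ≤ (1 - cos α) + (1 - cos β) := by
  have e : ∀ v : ℝ, 1 - cos v = 2 * sin (v/2)^2 := fun v => by
    have := Real.cos_sq (v/2); have h := Real.sin_sq_add_cos_sq (v/2)
    rw [show 2 * (v/2) = v by ring] at this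
    linarith
  rw [e, e, e, show (β - α)/2 = β/2 - α/2 by ring, Real.sin_sub]
  have h1 := Real.sin_sq_add_cos_sq (α/2)
  have h2 := Real.sin_sq_add_cos_sq (β/2)
  nlinarith [sq_nonneg (sin (β/2) * cos (α/2) + cos (β/2) * sin (α/2)),
    mul_nonneg (sq_nonneg (sin (β/2))) (sq_nonneg (sin (α/2)))]

lemma cos_le_mid {v : ℝ} (h1 : 1 ≤ v) (h2 : v ≤ 1 + π) : cos v ≤ 5/9 := by
  have hp := Real.pi_gt_three
  rcases le_or_gt v π with h | h
  · exact (Real.cos_le_cos_of_nonneg_of_le_pi (by norm_num) h h1).trans Real.cos_one_le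
  · rw [← Real.cos_two_pi_sub]
    exact (Real.cos_le_cos_of_nonneg_of_le_pi (by norm_num) (by linarith) (by linarith)).trans Real.cos_one_le

lemma k_choice {t θ : ℝ} (ht : 0 < t) (ht1 : t ≤ 1) (h0 : 0 ≤ θ) (hθ : θ ≤ π) :
    ∃ k : ℕ, k ≤ ⌈1/t⌉₊ ∧ min 1 ((θ/t)^2) / 5 ≤ 1 - cos (k * θ) := by
  obtain ⟨h1, h2, h3⟩ := Mfacts ht ht1
  rcases le_or_gt t θ with h | h
  · have hθ0 : 0 < θ := by linarith
    refine ⟨⌈1/θ⌉₊, Nat.ceil_le_ceil (by gcongr), ?_⟩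
    have a1 : 1 ≤ (⌈1/θ⌉₊:ℝ) * θ := by
      have := Nat.le_ceil (1/θ)
      calc (1:ℝ) = 1/θ * θ := by field_simp
        _ ≤ _ := by gcongr
    have a2 : (⌈1/θ⌉₊:ℝ) * θ ≤ 1 + π := by
      have := (Nat.ceil_lt_add_one (show 0 ≤ 1/θ by positivity)).le
      calc (⌈1/θ⌉₊:ℝ) * θ ≤ (1/θ + 1) * θ := by gcongr
        _ = 1 + θ := by field_simp
        _ ≤ _ := by linarith
    have := cos_le_mid a1 a2
    have := min_le_left 1 ((θ/t)^2)
    linarith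
  · refine ⟨⌈1/t⌉₊, le_rfl, ?_⟩
    set M := ⌈1/t⌉₊
    have a1 : θ/t ≤ M * θ := by
      calc θ/t = 1/t * θ := by ring
        _ ≤ _ := by gcongr
    have a2 : M * θ ≤ 2 := le_trans (by gcongr) h3
    have a3 : 0 ≤ M * θ := by positivity
    have hp := Real.pi_gt_three
    have := Real.cos_le_one_sub_mul_cos_sq (x := M * θ) (by rw [abs_of_nonneg a3]; linarith)
    have hp2 : π^2 ≤ 10 := by have := Real.pi_lt_d2; nlinarith
    have a4 : (1:ℝ)/5 ≤ 2/π^2 := by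
      rw [div_le_div_iff₀ (by norm_num) (by positivity)]; linarith
    have a5 : (θ/t)^2 ≤ (M*θ)^2 := by gcongr
    have := min_le_right 1 ((θ/t)^2)
    have a6 : 1/5 * (M*θ)^2 ≤ 2/π^2 * (M*θ)^2 := by gcongr
    linarith

lemma Dat.summ_cos (H : Dat r a) {t : ℝ} (ht : 0 < t) (θ : ℝ) :
    Summable (fun m : ℕ => a m * exp (-(m:ℝ) * t) * (1 - cos (m * θ))) := by
  refine Summable.of_nonneg_of_le (fun m => ?_) (fun m => ?_) ((H.summ0 ht).mul_right 2)
  · have := cos_le_one (m*θ)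
    exact mul_nonneg (mul_nonneg (H.nn m) (exp_pos _).le) (by linarith)
  · have := neg_one_le_cos (m*θ)
    exact mul_le_mul_of_nonneg_left (by linarith) (mul_nonneg (H.nn m) (exp_pos _).le)

lemma Dat.cos_lower (H : Dat r a) : ∃ c : ℝ, 0 < c ∧ ∀ t : ℝ, 0 < t → t ≤ 1 → ∀ θ, |θ| ≤ π →
    c / t^(r+1) * min 1 ((θ/t)^2) ≤ ∑' m : ℕ, a m * exp (-(m:ℝ) * t) * (1 - cos (m * θ)) := by
  refine ⟨exp (-6)/20, by positivity, fun t ht ht1 θ hθ => ?_⟩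
  wlog h0 : 0 ≤ θ generalizing θ
  · have := this (-θ) (by rwa [abs_neg]) (by linarith)
    simpa [neg_div] using this
  rw [abs_of_nonneg h0] at hθ
  obtain ⟨h1, h2, h3⟩ := Mfacts ht ht1
  obtain ⟨k, hk, hk2⟩ := k_choice ht ht1 h0 hθ
  set M := ⌈1/t⌉₊
  have hs := H.summ_cos ht θ
  have hnn : ∀ m : ℕ, 0 ≤ a m * exp (-(m:ℝ) * t) * (1 - cos (m * θ)) := fun m => by
    have := cos_le_one (m*θ)
    exact mul_nonneg (mul_nonneg (H.nn m) (exp_pos _).le) (by linarith)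
  have s1 := hs.sum_le_tsum (Finset.Ico M (2*M)) (fun m _ => hnn m)
  have s2 := hs.sum_le_tsum ((Finset.Ico M (2*M)).map (addRightEmbedding k)) (fun m _ => hnn m)
  rw [Finset.sum_map] at s2
  have lo : ∀ m ∈ Finset.Ico M (2*M), (M:ℝ)^r * exp (-6) * (min 1 ((θ/t)^2)/10) ≤
      a m * exp (-(m:ℝ) * t) * (1 - cos (m * θ)) +
      a (addRightEmbedding k m) * exp (-((addRightEmbedding k m : ℕ):ℝ) * t) * (1 - cos ((addRightEmbedding k m : ℕ) * θ)) := by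
    intro m hm
    rw [Finset.mem_Ico] at hm
    rw [addRightEmbedding_apply]
    have gen : ∀ j : ℕ, M ≤ j → j ≤ 3*M → (M:ℝ)^r * exp (-6) * (1 - cos (j*θ)) ≤ a j * exp (-(j:ℝ) * t) * (1 - cos (j * θ)) := by
      intro j hj1 hj2
      have e1 : (M:ℝ)^r ≤ a j := le_trans (by gcongr) (H.ge j (by omega))
      have e3 : (j:ℝ) ≤ 3 * M := by exact_mod_cast hj2
      have e2 : exp (-6) ≤ exp (-(j:ℝ) * t) := by
        apply exp_le_exp.2
        nlinarith
      have := cos_le_one (j*θ)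
      have := H.nn j
      refine mul_le_mul_of_nonneg_right ?_ (by linarith)
      gcongr
    have g1 := gen m hm.1 (by omega)
    have g2 := gen (m+k) (by omega) (by omega)
    have g3 := pair_cos (m*θ) ((m+k:ℕ)*θ)
    rw [show ((m+k:ℕ):ℝ)*θ - m*θ = k*θ by push_cast; ring] at g3
    have g4 : min 1 ((θ/t)^2)/10 ≤ (1 - cos (m*θ)) + (1 - cos ((m+k:ℕ)*θ)) := by linarith
    have g5 := mul_le_mul_of_nonneg_left g4 (show 0 ≤ (M:ℝ)^r * exp (-6) by positivity)
    linarith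
  have h4 := Finset.card_nsmul_le_sum _ _ _ lo
  rw [Nat.card_Ico, show 2 * M - M = M by omega, nsmul_eq_mul, Finset.sum_add_distrib] at h4
  have hMt : (1/t)^(r+1) ≤ (M:ℝ)^(r+1) := by gcongr
  have hmin : 0 ≤ min 1 ((θ/t)^2) := le_min (by norm_num) (sq_nonneg _)
  have : exp (-6)/20/t^(r+1) * min 1 ((θ/t)^2) ≤ (M * ((M:ℝ)^r * exp (-6) * (min 1 ((θ/t)^2)/10)))/2 := by
    calc exp (-6)/20/t^(r+1) * min 1 ((θ/t)^2) = exp (-6)/20 * (1/t)^(r+1) * min 1 ((θ/t)^2) := by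
          rw [one_div_pow]; ring
      _ ≤ exp (-6)/20 * (M:ℝ)^(r+1) * min 1 ((θ/t)^2) := by gcongr
      _ = _ := by ring
  linarith

end parte

section partf

variable {r : ℕ} {a : ℕ → ℝ}

/-- tilt -/
noncomputable def hh (a : ℕ → ℝ) (x s t : ℝ) : ℝ := s / sqrt (x * Bq a t)

/-- quadratic scale -/
noncomputable def VV (a : ℕ → ℝ) (x t : ℝ) : ℝ := x * Ss a 2 t

/-- drift -/
noncomputable def bb (a : ℕ → ℝ) (x s t : ℝ) : ℝ := x * Ss a 1 t * hh a x s t / sqrt (VV a x t)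

/-- small positive filter membership -/
lemma ev01 : ∀ᶠ t : ℝ in 𝓝[>] 0, 0 < t ∧ t ≤ 1 := by
  filter_upwards [Ioc_mem_nhdsGT (show (0:ℝ) < 1 by norm_num)] with t ht using ht

lemma pow_tend (k : ℕ) (C : ℝ) : Tendsto (fun t : ℝ => C * t^(k+1)) (𝓝[>] 0) (𝓝 0) := by
  have : Tendsto (fun t : ℝ => C * t^(k+1)) (𝓝 0) (𝓝 (C * 0^(k+1))) :=
    (Continuous.tendsto (by fun_prop) 0)
  simp only [ne_eq, Nat.add_eq_zero_iff, one_ne_zero, and_false, not_false_eq_true, zero_pow, mul_zero] at this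
  exact this.mono_left nhdsWithin_le_nhds

lemma Dat.Bpos (H : Dat r a) {x t : ℝ} (hx : 0 < x) (ht : 0 < t) (ht1 : t ≤ 1) : 0 < x * Bq a t := by
  obtain ⟨c, hc, h⟩ := H.Bq_lower
  exact mul_pos hx (lt_of_lt_of_le (by positivity) (h t ht ht1))

lemma Dat.Vpos (H : Dat r a) {x t : ℝ} (hx : 0 < x) (ht : 0 < t) : 0 < VV a x t :=
  mul_pos hx (H.S_pos 2 ht)

lemma Dat.hsq (H : Dat r a) {x : ℝ} (hx : 0 < x) (s : ℝ) : ∃ C : ℝ, 0 < C ∧ ∀ t, 0 < t → t ≤ 1 →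
    hh a x s t ^ 2 ≤ C * t^(r+1) := by
  obtain ⟨c, hc, h⟩ := H.Bq_lower
  refine ⟨(s^2 + 1) / (x * c), by positivity, fun t ht ht1 => ?_⟩
  have hB := H.Bpos hx ht ht1
  have h1 := h t ht ht1
  unfold hh
  rw [div_pow, sq_sqrt hB.le]
  calc s^2 / (x * Bq a t) ≤ (s^2+1) / (x * (c / t^(r+1))) := by gcongr; linarith
    _ = _ := by field_simp

lemma Dat.h_tend (H : Dat r a) {x : ℝ} (hx : 0 < x) (s : ℝ) : Tendsto (hh a x s) (𝓝[>] 0) (𝓝 0) := by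
  obtain ⟨C, hC, h⟩ := H.hsq hx s
  have h2 : Tendsto (fun t => hh a x s t ^ 2) (𝓝[>] 0) (𝓝 0) := by
    refine squeeze_zero' (Eventually.of_forall fun t => sq_nonneg _) ?_ (pow_tend r C)
    filter_upwards [ev01] with t ht using h t ht.1 ht.2
  have h3 := h2.sqrt
  simp only [sqrt_sq_eq_abs, sqrt_zero] at h3
  exact (tendsto_zero_iff_abs_tendsto_zero _).2 h3

lemma Dat.hS0 (H : Dat r a) {x : ℝ} (hx : 0 < x) (s : ℝ) : ∃ C : ℝ, 0 < C ∧ ∀ t, 0 < t → t ≤ 1 →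
    hh a x s t ^ 2 * (x * Ss a 0 t) ≤ C := by
  obtain ⟨C, hC, h⟩ := H.hsq hx s
  obtain ⟨D, hD, h'⟩ := H.upper 0
  refine ⟨C * (x * D), by positivity, fun t ht ht1 => ?_⟩
  have h1 := h t ht ht1
  have h2 := h' t ht
  have := H.S_pos 0 ht
  calc hh a x s t ^ 2 * (x * Ss a 0 t) ≤ (C * t^(r+1)) * (x * (D / t^(r+1+0))) := by gcongr
    _ = _ := by rw [add_zero]; field_simp

lemma Dat.b_bd (H : Dat r a) {x : ℝ} (hx : 0 < x) (s : ℝ) {t : ℝ} (ht : 0 < t) (ht1 : t ≤ 1) :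
    bb a x s t ^ 2 = hh a x s t ^ 2 * (x * Ss a 0 t) - s^2 := by
  have hB := H.Bpos hx ht ht1
  have hS := H.S_pos 2 ht
  have hS1 := H.S_pos 1 ht
  unfold bb hh
  rw [div_pow, sq_sqrt (H.Vpos hx ht).le, mul_pow, div_pow, sq_sqrt hB.le, VV]
  have hB2 : Bq a t ≠ 0 := fun h => by rw [h] at hB; simp at hB
  have e : Ss a 0 t = Bq a t + Ss a 1 t ^2 / Ss a 2 t := by unfold Bq; ring
  rw [e]
  field_simp
  ring

lemma Dat.b_le (H : Dat r a) {x : ℝ} (hx : 0 < x) (s : ℝ) : ∃ C : ℝ, 0 < C ∧ ∀ t, 0 < t → t ≤ 1 →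
    |bb a x s t| ≤ C := by
  obtain ⟨C, hC, h⟩ := H.hS0 hx s
  refine ⟨sqrt C, by positivity, fun t ht ht1 => ?_⟩
  apply Real.abs_le_sqrt
  rw [H.b_bd hx s ht ht1]
  have := h t ht ht1
  nlinarith [sq_nonneg s]

lemma Dat.V_bds (H : Dat r a) {x : ℝ} (hx : 0 < x) : ∃ c C : ℝ, 0 < c ∧ 0 < C ∧ ∀ t, 0 < t → t ≤ 1 →
    c / t^(r+3) ≤ VV a x t ∧ VV a x t ≤ C / t^(r+3) := by
  obtain ⟨C, hC, h⟩ := H.upper 2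
  obtain ⟨c, hc, h'⟩ := H.lower 2
  refine ⟨x * c, x * C, by positivity, by positivity, fun t ht ht1 => ⟨?_, ?_⟩⟩
  · rw [mul_div_assoc]; unfold VV; exact mul_le_mul_of_nonneg_left (h' t ht ht1) hx.le
  · rw [mul_div_assoc]; unfold VV; exact mul_le_mul_of_nonneg_left (h t ht) hx.le

lemma Dat.S3_tend (H : Dat r a) {x : ℝ} (hx : 0 < x) :
    Tendsto (fun t => Ss a 3 t / sqrt (VV a x t) ^ 3) (𝓝[>] 0) (𝓝 0) := by
  obtain ⟨c, C, hc, hC, h⟩ := H.V_bds hx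
  obtain ⟨D, hD, h'⟩ := H.upper 3
  have h2 : Tendsto (fun t => (Ss a 3 t / sqrt (VV a x t) ^ 3)^2) (𝓝[>] 0) (𝓝 0) := by
    refine squeeze_zero' (Eventually.of_forall fun t => sq_nonneg _) ?_ (pow_tend r (D^2 / c^3))
    filter_upwards [ev01] with t ht
    have h1 := (h t ht.1 ht.2).1
    have ht0 := ht.1
    have h2 := h' t ht.1
    have := H.S_pos 3 ht.1
    rw [div_pow, ← pow_mul, mul_comm 3 2, pow_mul, sq_sqrt (H.Vpos hx ht.1).le]
    calc Ss a 3 t ^ 2 / VV a x t ^ 3 ≤ (D / t^(r+1+3))^2 / (c / t^(r+3))^3 := by gcongr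
      _ = _ := by field_simp; ring
  have h3 := h2.sqrt
  simp only [sqrt_sq_eq_abs, sqrt_zero] at h3
  exact (tendsto_zero_iff_abs_tendsto_zero _).2 h3

lemma exp_cubic (v : ℝ) : ‖Complex.exp (v * Complex.I) - 1 - (v * Complex.I - v^2/2)‖ ≤ 4 * |v|^3 := by
  have nI : ‖(v * Complex.I : ℂ)‖ = |v| := by simp
  rcases le_or_gt |v| 1 with h | h
  · have := Complex.exp_bound (x := v * Complex.I) (by rwa [nI]) (n := 3) (by norm_num)
    rw [nI] at this
    simp only [Finset.sum_range_succ, Finset.sum_range_zero] at this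
    have e : Complex.exp (v * Complex.I) - 1 - (v * Complex.I - v^2/2) =
      Complex.exp (↑v * Complex.I) - (0 + (↑v * Complex.I) ^ 0 / ↑(Nat.factorial 0) + (↑v * Complex.I) ^ 1 / ↑(Nat.factorial 1) + (↑v * Complex.I) ^ 2 / ↑(Nat.factorial 2)) := by
      rw [mul_pow _ _ 2, Complex.I_sq]; simp; ring
    rw [e]
    refine this.trans ?_
    rw [mul_comm]
    gcongr
    norm_num [Nat.factorial]
  · calc ‖Complex.exp (v * Complex.I) - 1 - (v * Complex.I - v^2/2)‖
        ≤ (‖Complex.exp (v * Complex.I)‖ + ‖(1:ℂ)‖) + (‖(v * Complex.I : ℂ)‖ + ‖((v:ℂ)^2/2)‖) :=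
          (norm_sub_le _ _).trans (add_le_add (norm_sub_le _ _) (norm_sub_le _ _))
      _ = 1 + 1 + (|v| + |v|^2/2) := by rw [Complex.norm_exp_ofReal_mul_I, nI]; simp
      _ ≤ _ := by nlinarith [pow_le_pow_right₀ h.le (show 1 ≤ 3 by norm_num), pow_le_pow_right₀ h.le (show 2 ≤ 3 by norm_num), one_le_pow₀ h.le (n := 3)]

/-- the exponent sum -/
noncomputable def Psi (a : ℕ → ℝ) (t θ : ℝ) : ℂ :=
  ∑' m : ℕ, ((a m * exp (-(m:ℝ) * t) : ℝ) : ℂ) * (Complex.exp (m * θ * Complex.I) - 1)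

lemma norm_em (m : ℕ) (θ : ℝ) : ‖Complex.exp (m * θ * Complex.I) - 1‖ ≤ 2 := by
  refine (norm_sub_le _ _).trans ?_
  rw [show (m * θ * Complex.I : ℂ) = ((m * θ : ℝ):ℂ) * Complex.I by push_cast; ring,
          Complex.norm_exp_ofReal_mul_I]
  norm_num

lemma Dat.psi_term (H : Dat r a) (t θ : ℝ) (m : ℕ) :
    ‖((a m * exp (-(m:ℝ) * t) : ℝ) : ℂ) * (Complex.exp (m * θ * Complex.I) - 1)‖ ≤ a m * exp (-(m:ℝ) * t) * 2 := by
  rw [norm_mul, Complex.norm_real, Real.norm_eq_abs, abs_of_nonneg (mul_nonneg (H.nn m) (exp_pos _).le)]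
  exact mul_le_mul_of_nonneg_left (norm_em m θ) (mul_nonneg (H.nn m) (exp_pos _).le)

lemma Dat.psi_summ (H : Dat r a) {t : ℝ} (ht : 0 < t) (θ : ℝ) :
    Summable (fun m : ℕ => ((a m * exp (-(m:ℝ) * t) : ℝ) : ℂ) * (Complex.exp (m * θ * Complex.I) - 1)) :=
  Summable.of_norm_bounded ((H.summ0 ht).mul_right 2) (H.psi_term t θ)

lemma Dat.psi_cont (H : Dat r a) {t : ℝ} (ht : 0 < t) : Continuous (Psi a t) := by
  unfold Psi
  exact continuous_tsum (fun m => by fun_prop) ((H.summ0 ht).mul_right 2) (fun m θ => H.psi_term t θ m)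

lemma Dat.psi_re (H : Dat r a) {t : ℝ} (ht : 0 < t) (θ : ℝ) :
    (Psi a t θ).re = - ∑' m : ℕ, a m * exp (-(m:ℝ) * t) * (1 - cos (m * θ)) := by
  unfold Psi
  rw [Complex.re_tsum (H.psi_summ ht θ), ← tsum_neg]
  congr 1; ext m
  rw [Complex.re_ofReal_mul, Complex.sub_re, show (m * θ * Complex.I : ℂ) = ((m * θ : ℝ):ℂ) * Complex.I by push_cast; ring,
    Complex.exp_ofReal_mul_I_re, Complex.one_re]
  ring

lemma Dat.psi_approx (H : Dat r a) {t : ℝ} (ht : 0 < t) (θ : ℝ) :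
    ‖Psi a t θ - (θ * Ss a 1 t * Complex.I - θ^2 * Ss a 2 t / 2)‖ ≤ 4 * Ss a 3 t * |θ|^3 := by
  have i0 := (H.psi_summ ht θ).hasSum
  have i1 := (Complex.hasSum_ofReal.2 (H.summ 1 ht).hasSum).mul_left (θ * Complex.I)
  have i2 := (Complex.hasSum_ofReal.2 (H.summ 2 ht).hasSum).mul_left ((θ:ℂ)^2 / 2)
  have i3 := i0.sub (i1.sub i2)
  have j := ((H.summ 3 ht).hasSum).mul_left (4 * |θ|^3)
  have := i3.norm_le_of_bounded j (fun m => ?_)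
  · refine le_trans (le_of_eq ?_) (this.trans (le_of_eq ?_))
    · congr 1
      unfold Psi Ss
      ring
    · unfold Ss; ring
  · have e := exp_cubic (m * θ)
    have w : 0 ≤ a m * exp (-(m:ℝ) * t) := mul_nonneg (H.nn m) (exp_pos _).le
    have e2 := mul_le_mul_of_nonneg_left e w
    rw [abs_mul, Nat.abs_cast] at e2
    refine le_trans (le_of_eq ?_) (e2.trans (le_of_eq (by ring)))
    have e3 : ∀ z : ℂ, a m * exp (-(m:ℝ) * t) * ‖z‖ = ‖((a m * exp (-(m:ℝ) * t) : ℝ) : ℂ) * z‖ := by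
      intro z
      rw [norm_mul, Complex.norm_real, Real.norm_eq_abs, abs_of_nonneg w]
    rw [e3]
    congr 1
    push_cast
    ring

end partf

section partg

variable {r : ℕ} {a : ℕ → ℝ}

/-- the saddle integral -/
noncomputable def Jf (a : ℕ → ℝ) (y N t : ℝ) : ℂ :=
  ∫ θ in (-π)..π, Complex.exp (y * Psi a t θ - N * θ * Complex.I)

/-- rescaled integrand -/
noncomputable def Fu (a : ℕ → ℝ) (x s t u : ℝ) : ℂ :=
  Complex.exp ((x * exp (hh a x s t) : ℝ) * Psi a t (u / sqrt (VV a x t)) -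
    (x * Ss a 1 t : ℝ) * (u / sqrt (VV a x t) : ℝ) * Complex.I)

/-- limiting integrand -/
noncomputable def Gu (a : ℕ → ℝ) (x s t u : ℝ) : ℂ :=
  Complex.exp (-(1/2) * (u:ℂ)^2 + (bb a x s t * Complex.I) * u + 0)

/-- Gaussian constant -/
noncomputable def g0 : ℂ := (π / -(-(1/2) : ℂ)) ^ (1 / 2 : ℂ)

lemma g0_ne : g0 ≠ 0 := by
  unfold g0
  rw [Complex.cpow_ne_zero_iff]
  left
  simp [Real.pi_ne_zero]

lemma Gu_int (x s t : ℝ) : ∫ u : ℝ, Gu a x s t u = g0 * Complex.exp (-(bb a x s t : ℂ)^2 / 2) := by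
  unfold Gu
  rw [integral_cexp_quadratic (by norm_num)]
  unfold g0
  congr 2
  rw [mul_pow, Complex.I_sq]; ring

lemma Gu_norm (x s t u : ℝ) : ‖Gu a x s t u‖ = exp (-(1/2) * u^2) := by
  unfold Gu
  rw [Complex.norm_exp]
  congr 1
  have : (-(1/2) * (u:ℂ)^2 + (bb a x s t * Complex.I) * u + 0) = ((-(1/2) * u^2 : ℝ) : ℂ) + ((bb a x s t * u : ℝ):ℂ) * Complex.I := by
    push_cast; ring
  rw [this]
  simp only [Complex.add_re, Complex.ofReal_re, Complex.re_ofReal_mul, Complex.I_re, mul_zero, add_zero]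

lemma Dat.pointwise (H : Dat r a) {x : ℝ} (hx : 0 < x) (s u : ℝ) :
    Tendsto (fun t => Fu a x s t u - Gu a x s t u) (𝓝[>] 0) (𝓝 0) := by
  have hh0 := H.h_tend hx s
  have h3 := H.S3_tend hx
  obtain ⟨C, hC, hb⟩ := H.b_le hx s
  -- difference of exponents
  set E : ℝ → ℂ := fun t => ((x * exp (hh a x s t) : ℝ) * Psi a t (u / sqrt (VV a x t)) -
    (x * Ss a 1 t : ℝ) * (u / sqrt (VV a x t) : ℝ) * Complex.I) -
      (-(1/2) * (u:ℂ)^2 + (bb a x s t * Complex.I) * u + 0) with hE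
  have hEb : ∀ᶠ t in 𝓝[>] 0, ‖E t‖ ≤ 4 * x * |u|^3 * exp (hh a x s t) * (Ss a 3 t / sqrt (VV a x t) ^ 3) +
      C * |u| * |hh a x s t| + |u|^2 / 2 * |exp (hh a x s t) - 1| := by
    have hsm : ∀ᶠ t in 𝓝[>] 0, |hh a x s t| < 1 := by
      have := (hh0.abs)
      rw [abs_zero] at this
      exact this.eventually_lt_const (by norm_num)
    filter_upwards [ev01, hsm] with t ht hlt
    have hV := H.Vpos hx ht.1
    have hq : 0 < sqrt (VV a x t) := sqrt_pos.2 hV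
    set q := sqrt (VV a x t) with hqd
    have hq2 : q^2 = x * Ss a 2 t := sq_sqrt hV.le
    set h := hh a x s t with hhd
    have bE : bb a x s t = x * Ss a 1 t * h / q := rfl
    have hE2 : E t = (x * exp h : ℝ) * (Psi a t (u/q) - ((u/q : ℝ) * Ss a 1 t * Complex.I - (u/q : ℝ)^2 * Ss a 2 t / 2))
        + ((x * Ss a 1 t / q * (exp h - 1 - h) * u : ℝ) : ℂ) * Complex.I - ((u^2/2 * (exp h - 1) : ℝ) : ℂ) := by
      have e1 : ((u/q)^2 * Ss a 2 t * x : ℝ) = u^2 := by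
        rw [div_pow, hq2]
        have := (H.S_pos 2 ht.1).ne'
        field_simp
      have e1' : ((u/q : ℝ):ℂ)^2 * Ss a 2 t * x = (u:ℂ)^2 := by exact_mod_cast e1
      simp only [hE]
      rw [bE]
      push_cast at e1' ⊢
      linear_combination (- Complex.exp h / 2) * e1'
    rw [hE2]
    refine (norm_sub_le _ _).trans (add_le_add ((norm_add_le _ _).trans (add_le_add ?_ ?_)) ?_)
    · rw [norm_mul, Complex.norm_real, Real.norm_eq_abs, abs_of_pos (by positivity)]
      have := H.psi_approx ht.1 (u/q)
      calc _ ≤ x * exp h * (4 * Ss a 3 t * |u/q|^3) := by gcongr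
        _ = _ := by rw [abs_div, abs_of_pos hq]; field_simp
    · rw [norm_mul, Complex.norm_I, mul_one, Complex.norm_real, Real.norm_eq_abs, abs_mul, abs_mul]
      have e2 := Real.abs_exp_sub_one_sub_id_le hlt.le
      have e3 := hb t ht.1 ht.2
      rw [bE, mul_div_right_comm, abs_mul] at e3
      calc |x * Ss a 1 t / q| * |exp h - 1 - h| * |u| ≤ |x * Ss a 1 t / q| * h^2 * |u| := by gcongr
        _ = (|x * Ss a 1 t / q| * |h|) * |u| * |h| := by rw [← sq_abs]; ring
        _ ≤ _ := by gcongr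
    · rw [Complex.norm_real, Real.norm_eq_abs, abs_mul, abs_of_nonneg (by positivity : (0:ℝ) ≤ u^2/2), sq_abs]
  have hE0 : Tendsto E (𝓝[>] 0) (𝓝 0) := by
    refine squeeze_zero_norm' hEb ?_
    have t1 : Tendsto (fun t => exp (hh a x s t)) (𝓝[>] 0) (𝓝 1) := by
      have := (Real.continuous_exp.tendsto 0).comp hh0
      rwa [exp_zero] at this
    have t2 := ((t1.const_mul (4 * x * |u|^3)).mul h3).add (hh0.abs.const_mul (C * |u|))
    have t3 := t2.add (((t1.sub_const 1).abs).const_mul (|u|^2/2))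
    simpa using t3
  have hexp : Tendsto (fun t => ‖Complex.exp (E t) - 1‖) (𝓝[>] 0) (𝓝 0) := by
    have := ((Complex.continuous_exp.tendsto 0).comp hE0).sub_const 1
    rw [Complex.exp_zero, sub_self] at this
    simpa using this.norm
  refine squeeze_zero_norm (fun t => ?_) hexp
  have : Fu a x s t u = Gu a x s t u * Complex.exp (E t) := by
    unfold Fu Gu
    rw [← Complex.exp_add]; congr 1; simp only [hE]; ring
  rw [this, show Gu a x s t u * Complex.exp (E t) - Gu a x s t u = Gu a x s t u * (Complex.exp (E t) - 1) by ring,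
    norm_mul, Gu_norm]
  refine mul_le_of_le_one_left (norm_nonneg _) ?_
  rw [exp_le_one_iff]; nlinarith [sq_nonneg u]

lemma Dat.dominated (H : Dat r a) {x : ℝ} (hx : 0 < x) (s : ℝ) :
    ∃ K : ℝ, 0 < K ∧ ∀ᶠ t in 𝓝[>] 0, ∀ u, |u| ≤ π * sqrt (VV a x t) → ‖Fu a x s t u‖ ≤ K * (1 + u^2)⁻¹ := by
  obtain ⟨c, C, hc, hC, hV⟩ := H.V_bds hx
  obtain ⟨d, hd, hD⟩ := H.cos_lower
  have hh0 := H.h_tend hx s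
  set e := x * exp (-1) * d with he
  have he0 : 0 < e := by positivity
  -- constants
  refine ⟨(6 * (1 + π^2 * C) / e^3) + (1 + C / e), by positivity, ?_⟩
  have hsm : ∀ᶠ t in 𝓝[>] 0, |hh a x s t| < 1 := by
    have := (hh0.abs)
    rw [abs_zero] at this
    exact this.eventually_lt_const (by norm_num)
  filter_upwards [ev01, hsm] with t ht hlt u hu
  obtain ⟨ht0, ht1⟩ := ht
  have hVp := H.Vpos hx ht0
  have hq : 0 < sqrt (VV a x t) := sqrt_pos.2 hVp
  have hVu := (hV t ht0 ht1).2
  set q := sqrt (VV a x t) with hqd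
  have hq2 : q^2 = VV a x t := sq_sqrt hVp.le
  have hθ : |u/q| ≤ π := by rw [abs_div, abs_of_pos hq, div_le_iff₀ hq]; exact hu
  have hcos := hD t ht0 ht1 (u/q) hθ
  have hnorm : ‖Fu a x s t u‖ = exp (-(x * exp (hh a x s t) * ∑' m : ℕ, a m * exp (-(m:ℝ) * t) * (1 - cos (m * (u/q))))) := by
    unfold Fu
    rw [Complex.norm_exp]
    congr 1
    rw [Complex.sub_re, Complex.re_ofReal_mul, H.psi_re ht0, ← Complex.ofReal_mul, Complex.re_ofReal_mul, Complex.I_re]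
    ring
  have hy : x * exp (-1) ≤ x * exp (hh a x s t) := by
    gcongr; exact (abs_lt.1 hlt).1.le
  have hDn : 0 ≤ d / t^(r+1) * min 1 ((u/q/t)^2) := by
    have : 0 ≤ min 1 ((u/q/t)^2) := le_min (by norm_num) (sq_nonneg _)
    positivity
  have hlow : e / t^(r+1) * min 1 ((u/q/t)^2) ≤ x * exp (hh a x s t) * ∑' m : ℕ, a m * exp (-(m:ℝ) * t) * (1 - cos (m * (u/q))) := by
    calc e / t^(r+1) * min 1 ((u/q/t)^2) = x * exp (-1) * (d / t^(r+1) * min 1 ((u/q/t)^2)) := by rw [he]; ring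
      _ ≤ _ := by gcongr
  have hp : 0 < 1 + u^2 := by positivity
  rw [hnorm, ← div_eq_mul_inv, le_div_iff₀ hp]
  have hle : exp (-(x * exp (hh a x s t) * ∑' m : ℕ, a m * exp (-(m:ℝ) * t) * (1 - cos (m * (u/q))))) ≤
      exp (-(e / t^(r+1) * min 1 ((u/q/t)^2))) := exp_le_exp.2 (neg_le_neg hlow)
  refine (mul_le_mul_of_nonneg_right hle hp.le).trans ?_
  rcases le_total 1 ((u/q/t)^2) with h1 | h1
  · rw [min_eq_left h1, mul_one]
    have hu2 : u^2 ≤ π^2 * (C / t^(r+3)) := by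
      rw [← sq_abs]
      calc |u|^2 ≤ (π * q)^2 := by gcongr
        _ = π^2 * VV a x t := by rw [mul_pow, hq2]
        _ ≤ _ := by gcongr
    have ht3 : 1 ≤ 1 / t^(r+3) := by
      rw [le_div_iff₀ (by positivity), one_mul]; exact pow_le_one₀ ht0.le ht1
    have hu3 : 1 + u^2 ≤ (1 + π^2 * C) / t^(r+3) := by
      calc 1 + u^2 ≤ 1 / t^(r+3) + π^2 * (C / t^(r+3)) := by gcongr
        _ = _ := by ring
    have hex := Real.pow_div_factorial_le_exp (x := e / t^(r+1)) (by positivity) 3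
    have hex2 : exp (-(e / t^(r+1))) ≤ 6 * t^(3*(r+1)) / e^3 := by
      rw [exp_neg, inv_le_comm₀ (exp_pos _) (by positivity)]
      refine le_trans (le_of_eq ?_) hex
      rw [div_pow, ← pow_mul, mul_comm (r+1) 3]
      simp only [Nat.factorial]
      field_simp; norm_num
    calc exp (-(e / t^(r+1))) * (1 + u^2) ≤ (6 * t^(3*(r+1)) / e^3) * ((1 + π^2 * C) / t^(r+3)) := by gcongr
      _ = 6 * (1 + π^2 * C) / e^3 * t^(2*r) := by
          rw [show 3*(r+1) = 2*r + (r+3) by ring, pow_add]; field_simp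
      _ ≤ 6 * (1 + π^2 * C) / e^3 * 1 := by gcongr; exact pow_le_one₀ ht0.le ht1
      _ ≤ _ := by rw [mul_one]; have : 0 < 1 + C/e := by positivity
                  linarith
  · rw [min_eq_right h1]
    have hlow2 : e / C * u^2 ≤ e / t^(r+1) * (u/q/t)^2 := by
      rw [div_pow, div_pow, hq2]
      have : VV a x t * t^(r+3) ≤ C := by rwa [le_div_iff₀ (by positivity)] at hVu
      calc e / C * u^2 ≤ e / (VV a x t * t^(r+3)) * u^2 := by gcongr
        _ = _ := by field_simp; ring
    have h5 : exp (-(e / t^(r+1) * (u/q/t)^2)) ≤ (1 + e / C * u^2)⁻¹ := by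
      rw [exp_neg]
      gcongr
      have := add_one_le_exp (e / t^(r+1) * (u/q/t)^2)
      linarith
    have h6 : 0 ≤ 6 * (1 + π^2 * C) / e^3 := by positivity
    calc exp (-(e / t^(r+1) * (u/q/t)^2)) * (1 + u^2) ≤ (1 + e / C * u^2)⁻¹ * (1 + u^2) := by gcongr
      _ ≤ 1 + C / e := by
        rw [inv_mul_le_iff₀ (by positivity)]
        have : (1 + e / C * u^2) * (1 + C/e) = 1 + u^2 + C/e + e/C*u^2 := by field_simp; ring
        rw [this]
        have : 0 ≤ C/e := by positivity
        have : 0 ≤ e/C*u^2 := by positivity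
        linarith
      _ ≤ _ := by linarith

lemma Dat.J_eq (H : Dat r a) {x : ℝ} (hx : 0 < x) (s : ℝ) {t : ℝ} (ht : 0 < t) :
    (sqrt (VV a x t) : ℂ) * Jf a (x * exp (hh a x s t)) (x * Ss a 1 t) t =
      ∫ u, (Set.Ioc (-(π * sqrt (VV a x t))) (π * sqrt (VV a x t))).indicator (Fu a x s t) u := by
  have hq : 0 < sqrt (VV a x t) := sqrt_pos.2 (H.Vpos hx ht)
  rw [integral_indicator measurableSet_Ioc, ← intervalIntegral.integral_of_le (by have := pi_pos; nlinarith [mul_pos this hq])]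
  have := intervalIntegral.integral_comp_div (a := -(π * sqrt (VV a x t))) (b := π * sqrt (VV a x t)) (c := sqrt (VV a x t))
    (fun θ : ℝ => Complex.exp ((x * exp (hh a x s t) : ℝ) * Psi a t θ - (x * Ss a 1 t : ℝ) * θ * Complex.I)) hq.ne'
  unfold Fu
  rw [this, neg_div, mul_div_cancel_right₀ _ hq.ne']
  rw [Complex.real_smul]
  rfl

lemma Dat.J_asymp (H : Dat r a) {x : ℝ} (hx : 0 < x) (s : ℝ) :
    Tendsto (fun t => (sqrt (VV a x t) : ℂ) * Jf a (x * exp (hh a x s t)) (x * Ss a 1 t) t -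
      g0 * Complex.exp (-(bb a x s t : ℂ)^2 / 2)) (𝓝[>] 0) (𝓝 0) := by
  obtain ⟨K, hK, hdom⟩ := H.dominated hx s
  obtain ⟨c, C, hc, hC, hVb⟩ := H.V_bds hx
  have hFc : ∀ t, 0 < t → Continuous (Fu a x s t) := by
    intro t ht
    unfold Fu
    have := H.psi_cont ht
    fun_prop
  have hGc : ∀ t, Continuous (Gu a x s t) := by
    intro t; unfold Gu; fun_prop
  have hgi : Integrable (fun u : ℝ => exp (-(1/2) * u^2)) := integrable_exp_neg_mul_sq (by norm_num)
  have hki : Integrable (fun u : ℝ => K * (1 + u^2)⁻¹) := integrable_inv_one_add_sq.const_mul K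
  set I : ℝ → ℝ → ℂ := fun t u => (Set.Ioc (-(π * sqrt (VV a x t))) (π * sqrt (VV a x t))).indicator (Fu a x s t) u with hI
  have hIb : ∀ᶠ t in 𝓝[>] 0, ∀ u, ‖I t u‖ ≤ K * (1 + u^2)⁻¹ := by
    filter_upwards [hdom] with t ht u
    simp only [hI]
    by_cases hu : u ∈ Set.Ioc (-(π * sqrt (VV a x t))) (π * sqrt (VV a x t))
    · rw [Set.indicator_of_mem hu]
      exact ht u (abs_le.2 ⟨hu.1.le, hu.2⟩)
    · rw [Set.indicator_of_notMem hu, norm_zero]; positivity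
  have hIm : ∀ t, 0 < t → AEStronglyMeasurable (I t) volume := fun t ht =>
    ((hFc t ht).aestronglyMeasurable).indicator measurableSet_Ioc
  have hVtop : Tendsto (fun t => π * sqrt (VV a x t)) (𝓝[>] 0) atTop := by
    refine Tendsto.const_mul_atTop pi_pos ?_
    refine Real.tendsto_sqrt_atTop.comp ?_
    have h1 : Tendsto (fun t : ℝ => c * (1/t)) (𝓝[>] 0) atTop := by
      simp only [one_div]
      exact tendsto_inv_nhdsGT_zero.const_mul_atTop hc
    refine tendsto_atTop_mono' _ ?_ h1
    filter_upwards [ev01] with t ht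
    refine le_trans ?_ (hVb t ht.1 ht.2).1
    have ht0 := ht.1
    rw [mul_one_div]
    gcongr
    exact pow_le_of_le_one ht.1.le ht.2 (by omega)
  have key : Tendsto (fun t => ∫ u, (I t u - Gu a x s t u)) (𝓝[>] 0) (𝓝 (∫ _ : ℝ, (0:ℂ))) := by
    refine tendsto_integral_filter_of_dominated_convergence (fun u => K * (1 + u^2)⁻¹ + exp (-(1/2) * u^2)) ?_ ?_ (hki.add hgi) ?_
    · filter_upwards [ev01] with t ht
      exact (hIm t ht.1).sub (hGc t).aestronglyMeasurable
    · filter_upwards [hIb] with t ht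
      refine Eventually.of_forall fun u => ?_
      refine (norm_sub_le _ _).trans (add_le_add (ht u) ?_)
      rw [Gu_norm]
    · refine Eventually.of_forall fun u => ?_
      refine (H.pointwise hx s u).congr' ?_
      filter_upwards [hVtop.eventually_gt_atTop |u|] with t ht
      simp only [hI]
      rw [Set.indicator_of_mem]
      have := abs_lt.1 ht
      exact ⟨this.1, this.2.le⟩
  rw [integral_zero] at key
  refine key.congr' ?_
  filter_upwards [ev01, hIb] with t ht hb
  rw [integral_sub]
  · rw [Gu_int, H.J_eq hx s ht.1]
  · exact hki.mono' (hIm t ht.1) (Eventually.of_forall hb)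
  · exact hgi.mono' (hGc t).aestronglyMeasurable (Eventually.of_forall fun u => (Gu_norm x s t u).le)

end partg

section parth

variable {r : ℕ} {a : ℕ → ℝ}

lemma Dat.mgf_lim (H : Dat r a) {x : ℝ} (hx : 0 < x) (s : ℝ) :
    Tendsto (fun t => (exp ((exp (hh a x s t) - 1 - hh a x s t) * (x * Ss a 0 t)) : ℂ) *
      (Jf a (x * exp (hh a x s t)) (x * Ss a 1 t) t / Jf a x (x * Ss a 1 t) t)) (𝓝[>] 0) (𝓝 ((exp (s^2/2) : ℝ) : ℂ)) := by
  have hJ := H.J_asymp hx s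
  have hJ0 : Tendsto (fun t => (sqrt (VV a x t) : ℂ) * Jf a x (x * Ss a 1 t) t) (𝓝[>] 0) (𝓝 g0) := by
    have h := (H.J_asymp hx 0).add_const g0
    rw [zero_add] at h
    refine h.congr fun t => ?_
    simp [hh, bb]
  have hh0 := H.h_tend hx s
  obtain ⟨C, hC, hb⟩ := H.hS0 hx s
  -- exponents
  set A : ℝ → ℝ := fun t => exp ((exp (hh a x s t) - 1 - hh a x s t) * (x * Ss a 0 t)) with hA
  set D : ℝ → ℝ := fun t => (exp (hh a x s t) - 1 - hh a x s t - hh a x s t ^2 / 2) * (x * Ss a 0 t) with hD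
  have hD0 : Tendsto D (𝓝[>] 0) (𝓝 0) := by
    have t1 : Tendsto (fun t => C * |hh a x s t|) (𝓝[>] 0) (𝓝 0) := by
      simpa using hh0.abs.const_mul C
    refine squeeze_zero_norm' ?_ t1
    have hsm : ∀ᶠ t in 𝓝[>] 0, |hh a x s t| < 1 := by
      have := (hh0.abs)
      rw [abs_zero] at this
      exact this.eventually_lt_const (by norm_num)
    filter_upwards [ev01, hsm] with t ht hlt
    have hS := H.S_pos 0 ht.1
    set h := hh a x s t with hhd
    have e1 : |exp h - 1 - h - h^2/2| ≤ |h|^3 := by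
      have := Real.exp_bound hlt.le (n := 3) (by norm_num)
      simp only [Finset.sum_range_succ, Finset.sum_range_zero] at this
      norm_num [Nat.factorial] at this
      rw [show exp h - 1 - h - h^2/2 = exp h - (1 + h + h^2/2) by ring]
      refine this.trans ?_
      have : 0 ≤ |h|^3 := by positivity
      linarith
    simp only [hD]
    rw [Real.norm_eq_abs, abs_mul, abs_of_pos (by positivity : 0 < x * Ss a 0 t)]
    calc |exp h - 1 - h - h^2/2| * (x * Ss a 0 t) ≤ |h|^3 * (x * Ss a 0 t) := by gcongr
      _ = (h^2 * (x * Ss a 0 t)) * |h| := by rw [← sq_abs]; ring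
      _ ≤ _ := by have := hb t ht.1 ht.2; gcongr
  have hAb : ∀ᶠ t in 𝓝[>] 0, |A t| ≤ exp (1 + C) := by
    filter_upwards [ev01, hD0.eventually_lt_const (show (0:ℝ) < 1 by norm_num)] with t ht hlt
    simp only [hA]
    rw [abs_of_pos (exp_pos _)]
    apply exp_le_exp.2
    have := hb t ht.1 ht.2
    have e : (exp (hh a x s t) - 1 - hh a x s t) * (x * Ss a 0 t) = D t + hh a x s t ^2 * (x * Ss a 0 t) / 2 := by
      simp only [hD]; ring
    rw [e]; linarith
  have hmain : ∀ᶠ t in 𝓝[>] 0, A t * exp (-(bb a x s t)^2/2) = exp (s^2/2) * exp (D t) := by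
    filter_upwards [ev01] with t ht
    simp only [hA, hD]
    rw [← exp_add, ← exp_add]
    congr 1
    have := H.b_bd hx s ht.1 ht.2
    rw [show -(bb a x s t)^2/2 = -(bb a x s t ^2)/2 by ring, this]; ring
  -- T := √V J - g0 e^{..}
  have l1 : Tendsto (fun t => (A t : ℂ) * ((sqrt (VV a x t) : ℂ) * Jf a (x * exp (hh a x s t)) (x * Ss a 1 t) t -
      g0 * Complex.exp (-(bb a x s t : ℂ)^2 / 2))) (𝓝[>] 0) (𝓝 0) := by
    have t1 : Tendsto (fun t => exp (1 + C) * ‖(sqrt (VV a x t) : ℂ) * Jf a (x * exp (hh a x s t)) (x * Ss a 1 t) t -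
      g0 * Complex.exp (-(bb a x s t : ℂ)^2 / 2)‖) (𝓝[>] 0) (𝓝 0) := by
      simpa using hJ.norm.const_mul (exp (1 + C))
    refine squeeze_zero_norm' ?_ t1
    filter_upwards [hAb] with t ht
    rw [norm_mul, Complex.norm_real, Real.norm_eq_abs]
    gcongr
  have l2 : Tendsto (fun t => g0 * ((exp (s^2/2) * exp (D t) : ℝ) : ℂ)) (𝓝[>] 0) (𝓝 (g0 * ((exp (s^2/2) : ℝ) : ℂ))) := by
    have : Tendsto (fun t => exp (s^2/2) * exp (D t)) (𝓝[>] 0) (𝓝 (exp (s^2/2))) := by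
      have := ((Real.continuous_exp.tendsto 0).comp hD0).const_mul (exp (s^2/2))
      simpa using this
    exact ((Complex.continuous_ofReal.tendsto _).comp this).const_mul g0
  have l3 := (l1.add l2).div hJ0 g0_ne
  rw [zero_add, mul_div_cancel_left₀ _ g0_ne] at l3
  refine l3.congr' ?_
  filter_upwards [ev01, hmain] with t ht hm
  have hq : (sqrt (VV a x t) : ℂ) ≠ 0 := by
    exact_mod_cast (sqrt_pos.2 (H.Vpos hx ht.1)).ne'
  simp only [Pi.div_apply]
  rw [← hm]
  push_cast
  simp only [hA]
  push_cast
  rw [show ∀ α β γ δ : ℂ, α * (β - γ * δ) + γ * (α * δ) = α * β by intros; ring]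
  rw [← mul_div_assoc, ← mul_assoc, mul_comm _ (sqrt (VV a x t) : ℂ), mul_assoc, mul_div_mul_left _ _ hq]

/-- existence of the saddle point -/
lemma Dat.saddle (H : Dat r a) {x : ℝ} (hx : 0 < x) :
    ∃ τ : ℕ → ℝ, (∀ n, 1 ≤ n → 0 < τ n ∧ x * Ss a 1 (τ n) = n) ∧ Tendsto τ atTop (𝓝[>] 0) := by
  obtain ⟨C, hC, hu⟩ := H.upper 1
  obtain ⟨c, hc, hl⟩ := H.lower 1
  have hcont : ContinuousOn (fun t => x * Ss a 1 t) (Set.Ioi 0) := by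
    refine continuousOn_const.mul ?_
    intro t0 ht0
    have ht0' : 0 < t0 := ht0
    have hc1 : ContinuousOn (Ss a 1) (Set.Ici (t0/2)) := by
      unfold Ss
      refine continuousOn_tsum (fun m => by fun_prop) (H.summ 1 (half_pos ht0')) (fun m t ht => ?_)
      have ht' : t0/2 ≤ t := ht
      have h1 : 0 ≤ (m:ℝ)^1 * a m := mul_nonneg (by positivity) (H.nn m)
      rw [Real.norm_eq_abs, abs_of_nonneg (mul_nonneg h1 (exp_pos _).le)]
      refine mul_le_mul_of_nonneg_left (exp_le_exp.2 ?_) h1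
      have : (0:ℝ) ≤ m := by positivity
      nlinarith
    exact (hc1.continuousAt (Ici_mem_nhds (by linarith))).continuousWithinAt
  have hex : ∀ n : ℕ, ∃ t, 1 ≤ n → 0 < t ∧ x * Ss a 1 t = n := by
    intro n
    by_cases hn : 1 ≤ n
    swap
    · exact ⟨0, fun h => absurd h hn⟩
    have hn' : (1:ℝ) ≤ n := by exact_mod_cast hn
    -- small end
    set t1 := min 1 (x * c / n) with ht1
    have ht1p : 0 < t1 := lt_min (by norm_num) (by positivity)
    have ht1l : t1 ≤ 1 := min_le_left _ _
    have ht1r : t1 ≤ x * c / n := min_le_right _ _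
    set t2 := max 1 (x * C) with ht2
    have ht2l : 1 ≤ t2 := le_max_left _ _
    have ht2r : x * C ≤ t2 := le_max_right _ _
    have hA : (n:ℝ) ≤ x * Ss a 1 t1 := by
      have h1 := hl t1 ht1p ht1l
      have h2 : t1^(r+1+1) ≤ t1 := pow_le_of_le_one ht1p.le ht1l (by omega)
      calc (n:ℝ) ≤ x * c / t1 := by
            rw [le_div_iff₀ ht1p]
            rw [le_div_iff₀ (by positivity)] at ht1r
            linarith
        _ ≤ x * c / t1^(r+1+1) := by gcongr
        _ = x * (c / t1^(r+1+1)) := by ring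
        _ ≤ _ := by gcongr
    have hB : x * Ss a 1 t2 ≤ n := by
      have ht2p : 0 < t2 := by linarith
      have h1 := hu t2 ht2p
      have h2 : t2 ≤ t2^(r+1+1) := le_self_pow₀ ht2l (by omega)
      calc x * Ss a 1 t2 ≤ x * (C / t2^(r+1+1)) := by gcongr
        _ ≤ x * (C / t2) := by gcongr
        _ = x * C / t2 := by ring
        _ ≤ 1 := by rw [div_le_one ht2p]; exact ht2r
        _ ≤ n := hn'
    have hle : t1 ≤ t2 := ht1l.trans ht2l
    obtain ⟨t, ht, hte⟩ := intermediate_value_Icc' hle (hcont.mono fun y hy => lt_of_lt_of_le ht1p hy.1) ⟨hB, hA⟩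
    exact ⟨t, fun _ => ⟨lt_of_lt_of_le ht1p ht.1, hte⟩⟩
  choose τ hτ using hex
  refine ⟨τ, fun n hn => hτ n hn, ?_⟩
  rw [tendsto_nhdsWithin_iff]
  constructor
  · -- τ^(r+2) ≤ C x / n
    have h1 : Tendsto (fun n : ℕ => τ n ^ (r+1+1)) atTop (𝓝 0) := by
      have h2 : Tendsto (fun n : ℕ => (x * C) / (n:ℝ)) atTop (𝓝 0) := tendsto_const_div_atTop_nhds_zero_nat _
      refine squeeze_zero' ?_ ?_ h2
      · filter_upwards [eventually_ge_atTop 1] with n hn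
        exact pow_nonneg (hτ n hn).1.le _
      · filter_upwards [eventually_ge_atTop 1] with n hn
        obtain ⟨p, e⟩ := hτ n hn
        have hn' : (1:ℝ) ≤ n := by exact_mod_cast hn
        have h3 := hu _ p
        rw [le_div_iff₀ (by positivity)] at h3 ⊢
        rw [← e]
        calc _ = x * (Ss a 1 (τ n) * τ n ^ (r+1+1)) := by ring
          _ ≤ _ := by gcongr
    rw [Metric.tendsto_atTop] at h1 ⊢
    intro ε hε
    obtain ⟨N, hN⟩ := h1 (ε^(r+1+1)) (by positivity)
    refine ⟨max N 1, fun n hn => ?_⟩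
    have h2 := hN n (le_trans (le_max_left _ _) hn)
    have p := (hτ n (le_trans (le_max_right _ _) hn)).1
    rw [Real.dist_eq, sub_zero, abs_of_pos (by positivity)] at h2 ⊢
    exact lt_of_pow_lt_pow_left₀ _ hε.le h2
  · filter_upwards [eventually_ge_atTop 1] with n hn using (hτ n hn).1

end parth

section parti

/-- Gaussian moments -/
noncomputable def gm (p : ℕ) : ℝ := (1 / Real.sqrt (2 * π)) * ∫ s : ℝ, s ^ p * Real.exp (-s ^ 2 / 2)

lemma gm_eq (p : ℕ) : gm p = ∫ s, s ^ p ∂(ProbabilityTheory.gaussianReal 0 1) := by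
  rw [ProbabilityTheory.integral_gaussianReal_eq_integral_smul (by norm_num), gm, ← integral_const_mul]
  congr 1
  ext s
  simp [ProbabilityTheory.gaussianPDFReal_def]
  ring

lemma gm_series : HasFPowerSeriesAt (fun s : ℝ => exp (s^2/2))
    (FormalMultilinearSeries.ofScalars ℝ (fun n => gm n / n.factorial)) 0 := by
  have h := ProbabilityTheory.hasFPowerSeriesAt_mgf (X := id)
    (μ := ProbabilityTheory.gaussianReal 0 1) (v := 0) (by simp)
  rw [ProbabilityTheory.mgf_id_gaussianReal] at h
  convert h using 1
  · ext s; simp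
  · congr 1
    ext n
    rw [gm_eq]; simp

lemma moments_of_series (c : ℕ → ℝ)
    (h : ∀ᶠ s in 𝓝 (0:ℝ), HasSum (fun p : ℕ => c p * s^p / p.factorial) (exp (s^2/2))) : c = gm := by
  have h1 : HasFPowerSeriesAt (fun s : ℝ => exp (s^2/2))
      (FormalMultilinearSeries.ofScalars ℝ (fun n => c n / n.factorial)) 0 := by
    rw [hasFPowerSeriesAt_iff]
    filter_upwards [h] with s hs
    simp only [FormalMultilinearSeries.coeff_ofScalars, zero_add, smul_eq_mul]
    have e : (fun n : ℕ => s^n * (c n / n.factorial)) = fun p : ℕ => c p * s^p / p.factorial := by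
      ext n; ring
    rw [e]; exact hs
  have h2 := h1.eq_formalMultilinearSeries gm_series
  ext n
  have h3 := congrArg (fun q => FormalMultilinearSeries.coeff q n) h2
  simp only [FormalMultilinearSeries.coeff_ofScalars] at h3
  have : (n.factorial : ℝ) ≠ 0 := by positivity
  field_simp at h3
  exact h3

lemma moments_conv (w X : ℕ → ℕ → ℝ) (hw : ∀ n k, 0 ≤ w n k)
    (hM : ∀ s : ℝ, Tendsto (fun n : ℕ => ∑ k ∈ Finset.range (n+1), w n k * exp (s * X n k)) atTop
      (𝓝 (exp (s^2/2)))) (p : ℕ) :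
    Tendsto (fun n : ℕ => ∑ k ∈ Finset.range (n+1), w n k * X n k ^ p) atTop (𝓝 (gm p)) := by
  set m : ℕ → ℕ → ℝ := fun p n => ∑ k ∈ Finset.range (n+1), w n k * X n k ^ p with hm
  set M : ℝ → ℕ → ℝ := fun s n => ∑ k ∈ Finset.range (n+1), w n k * exp (s * X n k) with hMd
  set C : ℝ := 2 * exp 1 with hC
  have hbM : ∀ᶠ n in atTop, M 1 n + M (-1) n ≤ C := by
    have h := (hM 1).add (hM (-1))
    refine h.eventually_le_const ?_
    have : exp ((1:ℝ)^2/2) < exp 1 := exp_lt_exp.2 (by norm_num)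
    have h2 : exp ((-1:ℝ)^2/2) < exp 1 := exp_lt_exp.2 (by norm_num)
    rw [hC]; linarith
  have hmb : ∀ p n, |m p n| ≤ p.factorial * (M 1 n + M (-1) n) := by
    intro p n
    simp only [hm, hMd]
    rw [← Finset.sum_add_distrib, Finset.mul_sum]
    refine (Finset.abs_sum_le_sum_abs _ _).trans (Finset.sum_le_sum fun k _ => ?_)
    rw [abs_mul, abs_of_nonneg (hw n k), abs_pow]
    have h1 : |X n k|^p / p.factorial ≤ exp |X n k| := Real.pow_div_factorial_le_exp _ (abs_nonneg _) p
    have h2 : exp |X n k| ≤ exp (1 * X n k) + exp (-1 * X n k) := by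
      rw [one_mul, neg_one_mul]
      rcases abs_choice (X n k) with h | h <;> rw [h]
      · linarith [exp_pos (-X n k)]
      · linarith [exp_pos (X n k)]
    have hp : (0:ℝ) < p.factorial := by positivity
    rw [div_le_iff₀ hp] at h1
    have h3 := mul_le_mul_of_nonneg_left (h1.trans (mul_le_mul_of_nonneg_right h2 hp.le)) (hw n k)
    linarith
  rw [tendsto_iff_ultrafilter]
  intro g hg
  have hbg : ∀ᶠ n in (g : Filter ℕ), M 1 n + M (-1) n ≤ C := hg hbM
  have hlim : ∀ p, ∃ c, Tendsto (m p) g (𝓝 c) := by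
    intro p
    have hc : IsCompact (Set.Icc (-(p.factorial * C)) (p.factorial * C)) := isCompact_Icc
    obtain ⟨c, -, hc⟩ := hc.ultrafilter_le_nhds (g.map (m p)) (by
      rw [Ultrafilter.coe_map, le_principal_iff, mem_map]
      filter_upwards [hbg] with n hn
      have := (hmb p n).trans (mul_le_mul_of_nonneg_left hn (by positivity))
      exact abs_le.1 this)
    exact ⟨c, hc⟩
  choose c hc using hlim
  suffices c = gm by rw [← this]; exact hc p
  apply moments_of_series
  have hs : Metric.ball (0:ℝ) (1/2) ∈ 𝓝 (0:ℝ) := Metric.ball_mem_nhds _ (by norm_num)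
  filter_upwards [hs] with s hs
  rw [mem_ball_zero_iff, Real.norm_eq_abs] at hs
  have hC0 : 0 < C := by positivity
  have hcb : ∀ p, |c p| ≤ p.factorial * C := by
    intro p
    refine le_of_tendsto (hc p).abs ?_
    filter_upwards [hbg] with n hn
    exact (hmb p n).trans (mul_le_mul_of_nonneg_left hn (by positivity))
  have hgeo : Summable (fun p : ℕ => C * (1/2:ℝ)^p) :=
    (summable_geometric_of_lt_one (by norm_num) (by norm_num)).mul_left C
  have hbound : ∀ (z : ℝ) (p : ℕ), |z| ≤ p.factorial * C → ‖z * s^p / p.factorial‖ ≤ C * (1/2:ℝ)^p := by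
    intro z p hz
    have hp : (0:ℝ) < p.factorial := by positivity
    rw [Real.norm_eq_abs, abs_div, abs_mul, abs_pow, abs_of_pos hp, div_le_iff₀ hp]
    have h1 : |s|^p ≤ (1/2:ℝ)^p := by gcongr
    calc |z| * |s|^p ≤ (p.factorial * C) * (1/2:ℝ)^p := by gcongr
      _ = _ := by ring
  have hT : Tendsto (fun n => ∑' p : ℕ, m p n * s^p / p.factorial) g
      (𝓝 (∑' p : ℕ, c p * s^p / p.factorial)) := by
    refine tendsto_tsum_of_dominated_convergence hgeo (fun p => ?_) ?_
    · exact ((hc p).mul_const _).div_const _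
    · filter_upwards [hbg] with n hn
      intro p
      exact hbound _ _ ((hmb p n).trans (mul_le_mul_of_nonneg_left hn (by positivity)))
  have hsum : ∀ n, ∑' p : ℕ, m p n * s^p / p.factorial = M s n := by
    intro n
    refine HasSum.tsum_eq ?_
    have h1 : ∀ k ∈ Finset.range (n+1), HasSum (fun p : ℕ => w n k * ((s * X n k)^p / p.factorial))
        (w n k * exp (s * X n k)) := fun k _ => by
      refine HasSum.mul_left _ ?_
      rw [Real.exp_eq_exp_ℝ]
      exact NormedSpace.expSeries_div_hasSum_exp _
    have h2 := hasSum_sum h1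
    have e : (fun p : ℕ => m p n * s^p / p.factorial) =
        fun p : ℕ => ∑ k ∈ Finset.range (n+1), w n k * ((s * X n k)^p / p.factorial) := by
      ext p
      simp only [hm]
      rw [Finset.sum_mul, Finset.sum_div]
      refine Finset.sum_congr rfl fun k _ => ?_
      rw [mul_pow]; ring
    rw [e]; exact h2
  have hE : ∑' p : ℕ, c p * s^p / p.factorial = exp (s^2/2) := by
    refine tendsto_nhds_unique hT ?_
    simp only [hsum]
    exact (hM s).mono_left hg
  rw [← hE]
  exact (Summable.of_norm_bounded hgeo fun p => hbound _ _ (hcb p)).hasSum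

end parti


lemma gm_zero : gm 0 = 1 := by rw [gm_eq]; simp
lemma gm_one : gm 1 = 0 := by rw [gm_eq]; simp
lemma gm_two : gm 2 = 1 := by
  rw [gm_eq]
  have h := ProbabilityTheory.variance_fun_id_gaussianReal (μ := 0) (v := 1)
  rw [ProbabilityTheory.variance_eq_integral measurable_id'.aemeasurable] at h
  simpa using h

lemma Dat_av (r : ℕ) : Dat r (av (r+2)) where
  nn := av_nonneg _
  zero := by simp [av]
  ge := by
    intro m hm
    obtain ⟨k, rfl⟩ : ∃ k, m = k + 1 := ⟨m - 1, by omega⟩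
    have := av_ge r k
    push_cast
    exact this
  bd := av_sum r

lemma Wt_pos (ℓ n : ℕ) {y : ℝ} (hy : 0 < y) : 0 < Wt ℓ (Fin n) (fun k => y^k) := by
  letI : Fintype {σ : Fin ℓ → Equiv.Perm (Fin n) // Cm σ} := Fintype.ofFinite _
  rw [Wt_def]
  haveI : Nonempty {σ : Fin ℓ → Equiv.Perm (Fin n) // Cm σ} := ⟨⟨fun _ => 1, fun i j => rfl⟩⟩
  exact Finset.sum_pos (fun σ _ => pow_pos hy _) Finset.univ_nonempty

lemma Wt_Jf (r n : ℕ) (y t : ℝ) (ht : 0 < t) :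
    (Wt (r+2) (Fin n) (fun k => y^k) : ℂ) =
      ((n.factorial / (2*π) * exp (n*t + y * Ss (av (r+2)) 0 t) : ℝ) : ℂ) * Jf (av (r+2)) y n t := by
  have H := Dat_av r
  have h := Wt_integral (av (r+2)) H.nn H.zero (fun t ht => H.summ0 ht) y
    (fun n => Wt (r+2) (Fin n) (fun k => y^k)) (Wt_zero _ _) (fun n => by
      rw [Wt_rec]
      congr 1
      refine Finset.sum_congr rfl fun k _ => ?_
      have : ((k+1).factorial : ℝ) * av (r+2) (k+1) = trc (r+2) (Fin (k+1)) := by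
        unfold av
        rw [if_neg (by omega)]
        field_simp
      rw [this]) n t ht
  rw [h]
  have e : Ss (av (r+2)) 0 t = ∑' m : ℕ, av (r+2) m * exp (-(m:ℝ) * t) := by
    simp [Ss]
  rw [e]
  first | rfl | (congr 1; done) | (congr 1; simp [Jf, Psi])

/-- normalized weights -/
noncomputable def wn (ℓ : ℕ) (x : ℝ) (n k : ℕ) : ℝ :=
  (Acount ℓ n k : ℝ) * x^k / Wt ℓ (Fin n) (fun k => x^k)

lemma expectK_eq (ℓ n : ℕ) (x : ℝ) (g : ℕ → ℝ) :
    expectK ℓ n x g = ∑ k ∈ Finset.range (n+1), wn ℓ x n k * g k := by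
  unfold expectK wn
  rw [sum_Acount, Finset.sum_div]
  exact Finset.sum_congr rfl fun k _ => by ring

lemma wn_nonneg (ℓ : ℕ) {x : ℝ} (hx : 0 < x) (n k : ℕ) : 0 ≤ wn ℓ x n k :=
  div_nonneg (by positivity) (Wt_pos ℓ n hx).le

lemma wn_sum (ℓ : ℕ) {x : ℝ} (hx : 0 < x) (n : ℕ) : ∑ k ∈ Finset.range (n+1), wn ℓ x n k = 1 := by
  unfold wn
  rw [← Finset.sum_div, sum_Acount ℓ n (fun k => x^k), div_self (Wt_pos ℓ n hx).ne']

lemma mgf_eq (r n : ℕ) {x : ℝ} (hx : 0 < x) (s t : ℝ) (ht : 0 < t)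
    (hn : x * Ss (av (r+2)) 1 t = n) :
    ((∑ k ∈ Finset.range (n+1), wn (r+2) x n k *
      exp (s * (((k:ℝ) - x * Ss (av (r+2)) 0 t) / sqrt (x * Bq (av (r+2)) t))) : ℝ) : ℂ) =
    (exp ((exp (hh (av (r+2)) x s t) - 1 - hh (av (r+2)) x s t) * (x * Ss (av (r+2)) 0 t)) : ℂ) *
      (Jf (av (r+2)) (x * exp (hh (av (r+2)) x s t)) (x * Ss (av (r+2)) 1 t) t /
        Jf (av (r+2)) x (x * Ss (av (r+2)) 1 t) t) := by
  set a := av (r+2) with ha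
  set h := hh a x s t with hhd
  set S := Ss a 0 t with hS
  have e1 : ∑ k ∈ Finset.range (n+1), wn (r+2) x n k * exp (s * (((k:ℝ) - x * S) / sqrt (x * Bq a t))) =
      exp (-(h * (x * S))) * Wt (r+2) (Fin n) (fun k => (x * exp h)^k) / Wt (r+2) (Fin n) (fun k => x^k) := by
    rw [← sum_Acount (r+2) n (fun k => (x * exp h)^k), Finset.mul_sum, Finset.sum_div]
    refine Finset.sum_congr rfl fun k _ => ?_
    have : exp (s * (((k:ℝ) - x * S) / sqrt (x * Bq a t))) = exp h ^ k * exp (-(h * (x * S))) := by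
      rw [← exp_nat_mul, ← exp_add]
      congr 1
      rw [hhd, hh]; ring
    rw [this, wn, mul_pow]; ring
  have hW := Wt_pos (r+2) n hx
  have f0 := Wt_Jf r n x t ht
  have f1 := Wt_Jf r n (x * exp h) t ht
  rw [e1, hn]
  push_cast at f0 f1 ⊢
  rw [f1]
  have hJ : Jf a x n t ≠ 0 := by
    intro h0
    rw [← ha, h0, mul_zero] at f0
    exact hW.ne' (by exact_mod_cast f0)
  rw [f0, ← ha, ← hS]
  have hfac : (n.factorial : ℂ) ≠ 0 := by exact_mod_cast n.factorial_ne_zero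
  have hpi : (π : ℂ) ≠ 0 := by exact_mod_cast Real.pi_ne_zero
  have hE : Complex.exp (-(h * (x * S))) * Complex.exp (n * t + x * Complex.exp h * S) =
     Complex.exp ((Complex.exp h - 1 - h) * (x * S)) * Complex.exp (n * t + x * S) := by
    rw [← Complex.exp_add, ← Complex.exp_add]; congr 1; ring
  have hE0 := Complex.exp_ne_zero (n * t + x * S)
  generalize Complex.exp (n * t + x * S) = E0 at *
  generalize Complex.exp (n * t + x * Complex.exp h * S) = E1 at *
  generalize Complex.exp ((Complex.exp h - 1 - h) * (x * S)) = E2 at *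
  generalize Complex.exp (-(h * (x * S))) = E3 at *
  generalize Jf a (x * exp h) n t = J1 at *
  field_simp
  linear_combination J1 * hE

lemma sq_expand (w X : ℕ → ℝ) (n : ℕ) (h1 : ∑ k ∈ Finset.range (n+1), w k = 1) (c : ℝ)
    (hc : c = ∑ k ∈ Finset.range (n+1), w k * X k ^ 1) :
    ∑ k ∈ Finset.range (n+1), w k * (X k - c)^2 = (∑ k ∈ Finset.range (n+1), w k * X k ^ 2) - c^2 := by
  have : ∀ k ∈ Finset.range (n+1), w k * (X k - c)^2 = w k * X k ^2 - 2 * c * (w k * X k ^1) + c^2 * w k :=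
    fun k _ => by ring
  rw [Finset.sum_congr rfl this, Finset.sum_add_distrib, Finset.sum_sub_distrib, ← Finset.mul_sum,
    ← Finset.mul_sum, h1, ← hc]
  ring

lemma std_conv (w X : ℕ → ℕ → ℝ) 
    (hm : ∀ p, Tendsto (fun n : ℕ => ∑ k ∈ Finset.range (n+1), w n k * X n k ^ p) atTop (𝓝 (gm p))) (p : ℕ) :
    Tendsto (fun n : ℕ => ∑ k ∈ Finset.range (n+1), w n k *
      ((X n k - ∑ k ∈ Finset.range (n+1), w n k * X n k ^ 1) /
        sqrt ((∑ k ∈ Finset.range (n+1), w n k * X n k ^ 2) -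
          (∑ k ∈ Finset.range (n+1), w n k * X n k ^ 1)^2)) ^ p) atTop (𝓝 (gm p)) := by
  set m : ℕ → ℕ → ℝ := fun p n => ∑ k ∈ Finset.range (n+1), w n k * X n k ^ p with hmd
  have key : ∀ n, ∑ k ∈ Finset.range (n+1), w n k * ((X n k - m 1 n) / sqrt (m 2 n - m 1 n ^2)) ^ p =
      (∑ j ∈ Finset.range (p+1), m j n * (-m 1 n)^(p-j) * (p.choose j)) / sqrt (m 2 n - m 1 n ^2) ^ p := by
    intro n
    have : ∀ j, m j n = ∑ k ∈ Finset.range (n+1), w n k * X n k ^ j := fun j => rfl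
    have e : ∑ j ∈ Finset.range (p+1), m j n * (-m 1 n)^(p-j) * (p.choose j : ℝ) =
        ∑ k ∈ Finset.range (n+1), w n k * (X n k - m 1 n)^p := by
      simp_rw [sub_eq_add_neg, add_pow, Finset.mul_sum]
      rw [Finset.sum_comm]
      refine Finset.sum_congr rfl fun j _ => ?_
      nth_rewrite 1 [this j]
      rw [Finset.sum_mul, Finset.sum_mul]
      refine Finset.sum_congr rfl fun k _ => ?_
      ring
    rw [e, Finset.sum_div]
    refine Finset.sum_congr rfl fun k _ => ?_
    rw [div_pow]; ring
  have h1 : Tendsto (m 1) atTop (𝓝 0) := by rw [← gm_one]; exact hm 1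
  have h2 : Tendsto (m 2) atTop (𝓝 1) := by rw [← gm_two]; exact hm 2
  have hs : Tendsto (fun n => sqrt (m 2 n - m 1 n ^2) ^ p) atTop (𝓝 1) := by
    have := ((h2.sub (h1.pow 2)).sqrt).pow p
    simpa using this
  have hnum : Tendsto (fun n => ∑ j ∈ Finset.range (p+1), m j n * (-m 1 n)^(p-j) * (p.choose j : ℝ)) atTop
      (𝓝 (∑ j ∈ Finset.range (p+1), gm j * (-0)^(p-j) * (p.choose j : ℝ))) :=
    tendsto_finsetSum _ fun j _ => ((hm j).mul (h1.neg.pow _)).mul_const _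
  have hfin : ∑ j ∈ Finset.range (p+1), gm j * (-0:ℝ)^(p-j) * (p.choose j : ℝ) = gm p := by
    rw [Finset.sum_range_succ, Finset.sum_eq_zero]
    · simp
    · intro j hj
      have : p - j ≠ 0 := by have := Finset.mem_range.1 hj; omega
      simp [this]
  rw [hfin] at hnum
  have := hnum.div hs one_ne_zero
  rw [div_one] at this
  exact this.congr fun n => (key n).symm

theorem clt_moments (ℓ : ℕ) (hℓ : 2 ≤ ℓ) (x : ℝ) (hx : 0 < x) (p : ℕ) :
    Tendsto (fun n : ℕ =>
        expectK ℓ n x (fun k =>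
          (((k : ℝ) - meanK ℓ n x) / Real.sqrt (varK ℓ n x)) ^ p))
      atTop
      (nhds ((1 / Real.sqrt (2 * π)) * ∫ s : ℝ, s ^ p * Real.exp (-s ^ 2 / 2))) := by
  obtain ⟨r, rfl⟩ : ∃ r, ℓ = r + 2 := ⟨ℓ - 2, by omega⟩
  have H := Dat_av r
  set a := av (r+2) with ha
  obtain ⟨τ, hτ, hτ0⟩ := H.saddle hx
  set X : ℕ → ℕ → ℝ := fun n k => ((k:ℝ) - x * Ss a 0 (τ n)) / sqrt (x * Bq a (τ n)) with hX
  have hM : ∀ s : ℝ, Tendsto (fun n : ℕ => ∑ k ∈ Finset.range (n+1), wn (r+2) x n k * exp (s * X n k)) atTop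
      (𝓝 (exp (s^2/2))) := by
    intro s
    have h1 := (H.mgf_lim hx s).comp hτ0
    have h2 := (Complex.continuous_re.tendsto _).comp h1
    rw [Complex.ofReal_re] at h2
    refine h2.congr' ?_
    filter_upwards [eventually_ge_atTop 1] with n hn
    obtain ⟨h3, h4⟩ := hτ n hn
    have := mgf_eq r n hx s (τ n) h3 h4
    simp only [Function.comp_apply]
    rw [← ha] at this
    rw [← this, Complex.ofReal_re]
  have hmom := moments_conv (wn (r+2) x) X (wn_nonneg _ hx) hM
  have hstd := std_conv _ _ hmom p
  change Tendsto _ _ (𝓝 (gm p))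
  refine hstd.congr' ?_
  filter_upwards [hτ0.eventually ev01] with n hn
  rw [expectK_eq]
  have hB := H.Bpos hx hn.1 hn.2
  set b := sqrt (x * Bq a (τ n)) with hb
  have hbp : 0 < b := sqrt_pos.2 hB
  set μ := x * Ss a 0 (τ n) with hμ
  have hk : ∀ k : ℕ, (k:ℝ) = μ + b * X n k := by
    intro k
    simp only [hX]
    rw [← hμ, ← hb]
    field_simp
    ring
  set m1 := ∑ k ∈ Finset.range (n+1), wn (r+2) x n k * X n k ^ 1 with hm1
  have hw1 := wn_sum (r+2) hx n
  have hmean : meanK (r+2) n x = μ + b * m1 := by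
    rw [meanK, expectK_eq]
    calc _ = ∑ k ∈ Finset.range (n+1), (μ * wn (r+2) x n k + b * (wn (r+2) x n k * X n k ^ 1)) := by
          refine Finset.sum_congr rfl fun k _ => ?_
          rw [hk k]; ring
      _ = _ := by rw [Finset.sum_add_distrib, ← Finset.mul_sum, ← Finset.mul_sum, hw1, ← hm1, mul_one]
  have hcen : ∀ k : ℕ, (k:ℝ) - meanK (r+2) n x = b * (X n k - m1) := by
    intro k; rw [hmean, hk k]; ring
  have hvar : varK (r+2) n x = b^2 * ((∑ k ∈ Finset.range (n+1), wn (r+2) x n k * X n k ^ 2) - m1^2) := by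
    rw [varK, expectK_eq, ← sq_expand _ _ n hw1 m1 hm1, Finset.mul_sum]
    refine Finset.sum_congr rfl fun k _ => ?_
    rw [hcen k]; ring
  refine Finset.sum_congr rfl fun k _ => ?_
  rw [hcen k, hvar, sqrt_mul (sq_nonneg b), sqrt_sq hbp.le, mul_div_mul_left _ _ hbp.ne']
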